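/- Let d, k ≥ 1 be integers and θ ∈ (0,1). There exists a constant C = C(θ, k, d) such that for all x, y ∈ 𝕊^k with x + e₁₁ ∈ 𝕊^k and all t ≥ 0, |p_t^ℓ(x,y) − p_t^ℓ(x + e₁₁, y)| ≤ C (√t + 1)^{−(kd+θ)}. -/

import Mathlib

open scoped Classical

noncomputable section

namespace SSEPPaper

/-- Configurations of `k` labelled particles on `ℤ^d`. -/
abbrev Conf (d k : ℕ) := Fin k → Fin d → ℤ

/-- Euclidean norm of an integer vector in `ℤ^d`. -/
def vnorm {d : ℕ} (v : Fin d → ℤ) : ℝ := Real.sqrt (∑ j, ((v j : ℝ)) ^ 2)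

/-- Euclidean norm on `(ℝ^d)^k` of an integer configuration. -/
def cnorm {d k : ℕ} (x : Conf d k) : ℝ := Real.sqrt (∑ i, ∑ j, ((x i j : ℝ)) ^ 2)

/-- The set `𝕊^k` of configurations with pairwise distinct particle positions. -/
def SSet (d k : ℕ) : Set (Conf d k) := {x | ∀ i j : Fin k, i ≠ j → x i ≠ x j}

/-- Swap of the coordinates `i` and `j` of a configuration, i.e. `σ^{i,j}x`. -/
def cswap {d k : ℕ} (i j : Fin k) (x : Conf d k) : Conf d k := x ∘ Equiv.swap i j

/-- `δ^{i,j}w`: the configuration which agrees with `w` except that its `j`-th coordinate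
is replaced by `w i`. -/
def cdelta {d k : ℕ} (i j : Fin k) (w : Conf d k) : Conf d k := Function.update w j (w i)

/-- Kronecker delta function at `y`. -/
def deltaFn {α : Type*} (y : α) : α → ℝ := fun x => if x = y then 1 else 0

/-- Generator of the labelled exclusion process, extended to all of `(ℤ^d)^k`. -/
def Lexc {d k : ℕ} (f : Conf d k → ℝ) : Conf d k → ℝ := fun x =>
  (∑' y : Conf d k, if cnorm (y - x) = 1 ∧ y ∈ SSet d k then f y - f x else 0) +
    ∑ i : Fin k, ∑ j : Fin k,
      if i < j ∧ vnorm (x i - x j) = 1 ∧ x ∈ SSet d k then f (cswap i j x) - f x else 0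

/-- Generator of `k` independent simple random walks on `ℤ^d`. -/
def Lrw {d k : ℕ} (f : Conf d k → ℝ) : Conf d k → ℝ := fun x =>
  ∑' z : Conf d k, if cnorm (z - x) = 1 then f z - f x else 0

/-- Generator (discrete Laplacian) of a single simple random walk on `ℤ^d`. -/
def Lap {d : ℕ} (f : (Fin d → ℤ) → ℝ) : (Fin d → ℤ) → ℝ := fun x =>
  ∑' y : Fin d → ℤ, if vnorm (y - x) = 1 then f y - f x else 0

/-- Transition probabilities `p_t^ℓ(x,y) = (e^{tL^ℓ} δ_y)(x)` of the labelled exclusion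
process, given by the exponential power series of the generator. -/
def ptl {d k : ℕ} (t : ℝ) (x y : Conf d k) : ℝ :=
  ∑' n : ℕ, t ^ n / n.factorial * ((Lexc (d := d) (k := k))^[n] (deltaFn y)) x

/-- Transition probabilities `p_t^{rw}(x,y) = (e^{tL^{rw}} δ_y)(x)` of `k` independent
simple random walks on `ℤ^d`. -/
def ptrw {d k : ℕ} (t : ℝ) (x y : Conf d k) : ℝ :=
  ∑' n : ℕ, t ^ n / n.factorial * ((Lrw (d := d) (k := k))^[n] (deltaFn y)) x

/-- Transition probabilities `p_t(x,y) = (e^{tΔ} δ_y)(x)` of a single continuous-time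
simple random walk on `ℤ^d`. -/
def pt1 {d : ℕ} (t : ℝ) (x y : Fin d → ℤ) : ℝ :=
  ∑' n : ℕ, t ^ n / n.factorial * ((Lap (d := d))^[n] (deltaFn y)) x

/-- The configuration `e₁₁ = ((1,0,…,0),(0,…,0),…,(0,…,0))`. -/
def e11 (d k : ℕ) : Conf d k := fun i j => if i.val = 0 ∧ j.val = 0 then 1 else 0

/-!
Letting a particle which jumps onto another one exchange places with it turns the exclusion process
into a chain on `𝕊^k` whose jumps are permutations. The one-step operator of its lazy discrete
skeleton is self-adjoint on `ℓ²` with spectrum in `[0, 1]`. Products of jumps displace a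
configuration to about `R ^ (k * d)` others within distance `R`, and this volume growth gives a
Nash-type bound `n ^ (-k * d / 2)` for the `n`-step kernel `u`; self-adjointness improves it by
a factor `1 / n` for the generator `L u`.

Put `α = 1 / n` and `f = α u - L u`, which is `α` times as small as the bound on `u`. Extend `f` by
zero to all of `(ℤ^d)^k` and let `Ψ` solve the same resolvent equation for independent walks. The
gradient of `Ψ` is at most of order `α ^ (-1 / 2) ‖f‖`. At a contact the two generators applied to
`Ψ` differ by mixed second differences of `Ψ`, of order `α ^ (-δ) ‖f‖` for every `δ > 0`. A barrier
function of the distances between the particles, with slope one at contact and height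
`α ^ (-1 / 2)`, is a supersolution which absorbs these contact terms, so the maximum principle
bounds `u - Ψ` by `α ^ (-1 / 2 - δ) ‖f‖`. With `δ = (1 - θ) / 2` this gives the gradient bound in
discrete time, and averaging over a Poisson number of steps carries it to continuous time.
-/

/-! ### Self-adjoint contractions with nonnegative form -/

section Spectral

lemma succ_mul_sub_le_of_antitone_sub {γ : ℕ → ℝ} (hγ : ∀ j, 0 ≤ γ j)
    (hd : Antitone fun j ↦ γ j - γ (j + 1)) (n : ℕ) :
    ((n : ℝ) + 1) * (γ n - γ (n + 1)) ≤ γ 0 := by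
  have hsum : (n + 1) • (γ n - γ (n + 1)) ≤ ∑ j ∈ Finset.range (n + 1), (γ j - γ (j + 1)) := by
    simpa using Finset.card_nsmul_le_sum (Finset.range (n + 1)) (fun j ↦ γ j - γ (j + 1)) _
      fun j hj ↦ hd (Finset.mem_range_succ_iff.mp hj)
  rw [Finset.sum_range_sub', nsmul_eq_mul] at hsum
  push_cast at hsum
  linarith [hγ (n + 1)]

variable {V : Type*} [AddCommGroup V] [Module ℝ V] {B : LinearMap.BilinForm ℝ V}

lemma abs_form_le (hB : B.IsPosSemidef) (u v : V) : |B u v| ≤ √(B u u) * √(B v v) := by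
  rw [← Real.sqrt_mul (hB.nonneg u)]
  exact Real.abs_le_sqrt (B.apply_sq_le_of_symm hB.nonneg
    (LinearMap.BilinForm.isSymm_iff.mp hB.isSymm) u v)

lemma sqrt_form_add_le (hB : B.IsPosSemidef) (u v : V) :
    √(B (u + v) (u + v)) ≤ √(B u u) + √(B v v) := by
  refine Real.sqrt_le_iff.mpr ⟨by positivity, ?_⟩
  simp only [map_add, LinearMap.add_apply, hB.isSymm.eq v u]
  nlinarith [Real.sq_sqrt (hB.nonneg u), Real.sq_sqrt (hB.nonneg v),
    (le_abs_self _).trans (abs_form_le hB u v)]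

/-- `K` is self-adjoint for `B` and its spectrum lies in `[0, 1]`, expressed through the
inequalities `0 ≤ B (K u) u ≤ B u u`. -/
structure IsPosContraction (B : LinearMap.BilinForm ℝ V) (K : Module.End ℝ V) : Prop where
  isSelfAdjoint : B.IsSelfAdjoint K
  form_nonneg : ∀ u, 0 ≤ B (K u) u
  form_le : ∀ u, B (K u) u ≤ B u u

namespace IsPosContraction

variable {K : Module.End ℝ V}

lemma form_pow_pow (hK : IsPosContraction B K) (i j : ℕ) (u v : V) :
    B ((K ^ i) u) ((K ^ j) v) = B ((K ^ (i + j)) u) v := by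
  induction j generalizing i with
  | zero => simp
  | succ j ih =>
    rw [pow_succ', Module.End.mul_apply, ← hK.isSelfAdjoint, ← Module.End.mul_apply, ← pow_succ',
      ih, Nat.succ_add_eq_add_succ]

lemma form_apply_apply_le (hK : IsPosContraction B K) (u : V) : B (K u) (K u) ≤ B (K u) u := by
  have hnonneg := hK.form_nonneg (u - K u)
  have hle := hK.form_le (K u)
  have hadj := hK.isSelfAdjoint (K u) u
  simp only [map_sub, LinearMap.sub_apply] at hnonneg
  linarith

lemma form_pow_nonneg (hK : IsPosContraction B K) (hB : B.IsPosSemidef) (u : V) (j : ℕ) :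
    0 ≤ B ((K ^ j) u) u := by
  obtain ⟨i, rfl | rfl⟩ := Nat.even_or_odd' j
  · rw [two_mul, ← hK.form_pow_pow]
    exact hB.nonneg _
  · rw [show 2 * i + 1 = (i + 1) + i by ring, ← hK.form_pow_pow, pow_succ']
    exact hK.form_nonneg _

lemma form_pow_antitone (hK : IsPosContraction B K) (u : V) :
    Antitone fun j ↦ B ((K ^ j) u) u := by
  refine antitone_nat_of_succ_le fun j ↦ ?_
  obtain ⟨i, rfl | rfl⟩ := Nat.even_or_odd' j
  · rw [show 2 * i + 1 = (i + 1) + i by ring, two_mul, ← hK.form_pow_pow _ _ u u,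
      ← hK.form_pow_pow _ _ u u, pow_succ']
    exact hK.form_le _
  · rw [show 2 * i + 1 + 1 = (i + 1) + (i + 1) by ring, show 2 * i + 1 = (i + 1) + i by ring,
      ← hK.form_pow_pow _ _ u u, ← hK.form_pow_pow _ _ u u, pow_succ']
    exact hK.form_apply_apply_le _

lemma form_pow_sub_apply (hK : IsPosContraction B K) (u : V) (j : ℕ) :
    B ((K ^ j) (u - K u)) (u - K u)
      = B ((K ^ j) u) u - B ((K ^ (j + 1)) u) u
        - (B ((K ^ (j + 1)) u) u - B ((K ^ (j + 1 + 1)) u) u) := by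
  have happly : (K ^ j) (K u) = (K ^ (j + 1)) u := by rw [pow_succ, Module.End.mul_apply]
  have hshift : ∀ i, B ((K ^ i) u) (K u) = B ((K ^ (i + 1)) u) u := fun i ↦ by
    simpa using hK.form_pow_pow i 1 u u
  simp only [map_sub, LinearMap.sub_apply, happly, hshift]

lemma form_pow_sub_antitone (hK : IsPosContraction B K) (hB : B.IsPosSemidef) (u : V) :
    Antitone fun j ↦ B ((K ^ j) u) u - B ((K ^ (j + 1)) u) u := by
  refine antitone_nat_of_succ_le fun j ↦ ?_
  have := hK.form_pow_nonneg hB (u - K u) j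
  rw [hK.form_pow_sub_apply] at this
  linarith

lemma succ_mul_form_pow_sub_le (hK : IsPosContraction B K) (hB : B.IsPosSemidef) (u : V) (n : ℕ) :
    ((n : ℝ) + 1) * (B ((K ^ n) u) u - B ((K ^ (n + 1)) u) u) ≤ B u u :=
  succ_mul_sub_le_of_antitone_sub (hK.form_pow_nonneg hB u) (hK.form_pow_sub_antitone hB u) n

/-- Applies `succ_mul_sub_le_of_antitone_sub` a second time, to the first differences of the
moment sequence; their differences are the moments of `u - K u`. -/
lemma succ_sq_mul_form_pow_sub_le (hK : IsPosContraction B K) (hB : B.IsPosSemidef) (u : V)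
    (n : ℕ) :
    ((n : ℝ) + 1) ^ 2 * B ((K ^ n) (u - K u)) ((K ^ n) (u - K u)) ≤ B u u := by
  have hfirst := hK.succ_mul_form_pow_sub_le hB u n
  have hsecond := succ_mul_sub_le_of_antitone_sub
    (γ := fun j ↦ B ((K ^ (n + j)) u) u - B ((K ^ (n + j + 1)) u) u)
    (fun j ↦ sub_nonneg.mpr (hK.form_pow_antitone u (Nat.le_succ _)))
    (fun i j hij ↦ by
      simpa only [hK.form_pow_sub_apply, add_assoc] using
        hK.form_pow_antitone (u - K u) (Nat.add_le_add_left hij n)) n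
  simp only [← add_assoc, ← hK.form_pow_sub_apply, add_zero] at hsecond
  rw [hK.form_pow_pow]
  nlinarith [(n.cast_nonneg : (0 : ℝ) ≤ n)]

end IsPosContraction

end Spectral

/-! ### Finitely supported functions -/

section FiniteSupport

open scoped Finset

variable {X : Type*}

/-- The subspace of finitely supported functions in `X → ℝ`. It is preferred to `X →₀ ℝ` because
the operators below are restrictions of operators acting on all functions. -/
def finSuppSubmodule (X : Type*) : Submodule ℝ (X → ℝ) where
  carrier := {u | u.HasFiniteSupport}
  add_mem' hu hv := Function.HasFiniteSupport.add hu hv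
  zero_mem' := Function.hasFiniteSupport_fun_zero
  smul_mem' c _ hu := Set.Finite.subset hu (Function.support_const_smul_subset c _)

/-- The type of finitely supported real functions on `X`. -/
abbrev FinSupp (X : Type*) : Type _ := finSuppSubmodule X

namespace FinSupp

instance : FunLike (FinSupp X) X ℝ where
  coe u := u.1
  coe_injective _ _ := Subtype.ext

lemma summable (u : FinSupp X) : Summable u := summable_of_hasFiniteSupport u.2

lemma summable_mul (u : FinSupp X) (f : X → ℝ) : Summable fun x ↦ u x * f x :=
  summable_of_hasFiniteSupport (u.2.subset (Function.support_mul_subset_left _ _))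

lemma add_apply (u v : FinSupp X) (x : X) : (u + v) x = u x + v x := rfl

lemma sub_apply (u v : FinSupp X) (x : X) : (u - v) x = u x - v x := rfl

lemma smul_apply (c : ℝ) (u : FinSupp X) (x : X) : (c • u) x = c * u x := rfl

/-- Precomposition with a permutation. -/
def comp (u : FinSupp X) (g : Equiv.Perm X) : FinSupp X :=
  ⟨fun x ↦ u (g x), u.2.preimage g.injective.injOn⟩

lemma comp_apply (u : FinSupp X) (g : Equiv.Perm X) (x : X) : u.comp g x = u (g x) := rfl

/-- The indicator function of the point `y`. -/
def delta (y : X) : FinSupp X :=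
  ⟨deltaFn y, (Set.finite_singleton y).subset fun x hx ↦ by
    by_contra h
    exact hx (if_neg h)⟩

lemma delta_apply (x y : X) : delta y x = if x = y then 1 else 0 := rfl

end FinSupp

/-- The `ℓ²` inner product on finitely supported functions. -/
def l2Form (X : Type*) : LinearMap.BilinForm ℝ (FinSupp X) :=
  LinearMap.mk₂ ℝ (fun u v ↦ ∑' x, u x * v x)
    (fun u v w ↦ by
      rw [← (u.summable_mul w).tsum_add (v.summable_mul w)]
      simp only [FinSupp.add_apply, add_mul])
    (fun c u v ↦ by simp only [FinSupp.smul_apply, mul_assoc, tsum_mul_left, smul_eq_mul])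
    (fun u v w ↦ by
      rw [← (u.summable_mul v).tsum_add (u.summable_mul w)]
      simp only [FinSupp.add_apply, mul_add])
    (fun c u v ↦ by simp only [FinSupp.smul_apply, mul_left_comm, tsum_mul_left, smul_eq_mul])

lemma l2Form_apply (u v : FinSupp X) : l2Form X u v = ∑' x, u x * v x := rfl

lemma l2Form_isPosSemidef : (l2Form X).IsPosSemidef where
  eq u v := by simp only [l2Form_apply, mul_comm]
  nonneg u := tsum_nonneg fun x ↦ mul_self_nonneg (u x)

lemma l2Form_delta (x : X) (u : FinSupp X) : l2Form X (FinSupp.delta x) u = u x := by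
  simp [l2Form_apply, FinSupp.delta_apply]

lemma l2Form_comp_comp (u v : FinSupp X) (g : Equiv.Perm X) :
    l2Form X (u.comp g) (v.comp g) = l2Form X u v :=
  g.tsum_eq fun x ↦ u x * v x

/-- If a permutation moves a probability vector `u` only a little in `ℓ²`, then `‖u‖²` is close
to the correlation of `u` with its translate; averaging over a family of permutations that rarely
sends one point to another makes the correlations small. -/
lemma l2Form_self_le_of_translates {ι : Type*} [Fintype ι] [Nonempty ι] {g : ι → Equiv.Perm X}
    {C D : ℝ} (hC : ∀ x y, (#{r | g r x = y} : ℝ) ≤ C) {u : FinSupp X} (hu : ∀ x, 0 ≤ u x)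
    (hu1 : ∑' x, u x = 1)
    (hD : ∀ r, l2Form X (u.comp (g r) - u) (u.comp (g r) - u) ≤ D) :
    l2Form X u u ≤ D / 2 + C / Fintype.card ι := by
  have hC0 : 0 ≤ C := by
    obtain ⟨x⟩ : Nonempty X := by
      by_contra! hX
      simp at hu1
    exact (Nat.cast_nonneg _).trans (hC x x)
  have hsum (x : X) : ∑ r, u (g r x) ≤ C := by
    rw [Finset.sum_comp u (fun r ↦ g r x)]
    calc ∑ b ∈ Finset.univ.image (fun r ↦ g r x), #{r | g r x = b} • u b
        ≤ ∑ b ∈ Finset.univ.image (fun r ↦ g r x), C * u b := Finset.sum_le_sum fun b _ ↦ by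
          rw [nsmul_eq_mul]
          exact mul_le_mul_of_nonneg_right (hC x b) (hu b)
      _ ≤ C * 1 := by
          rw [← Finset.mul_sum, ← hu1]
          gcongr
          exact u.summable.sum_le_tsum _ fun x _ ↦ hu x
      _ = C := mul_one C
  have hcorr : ∑ r, l2Form X u (u.comp (g r)) ≤ C := by
    calc ∑ r, l2Form X u (u.comp (g r)) = ∑' x, u x * ∑ r, u (g r x) := by
          simp only [Finset.mul_sum]
          exact (Summable.tsum_finsetSum fun r _ ↦ u.summable_mul _).symm
      _ ≤ ∑' x, u x * C := (u.summable_mul _).tsum_le_tsum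
          (fun x ↦ mul_le_mul_of_nonneg_left (hsum x) (hu x)) (u.summable_mul _)
      _ = C := by rw [tsum_mul_right, hu1, one_mul]
  have hexp (r : ι) : l2Form X u u ≤ D / 2 + l2Form X u (u.comp (g r)) := by
    have := hD r
    simp only [map_sub, LinearMap.sub_apply, l2Form_comp_comp,
      l2Form_isPosSemidef.isSymm.eq (u.comp (g r)) u] at this
    linarith
  have havg := Finset.sum_le_sum fun r (_ : r ∈ Finset.univ) ↦ hexp r
  simp only [Finset.sum_add_distrib, Finset.sum_const, Finset.card_univ, nsmul_eq_mul] at havg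
  have hcard : (0 : ℝ) < Fintype.card ι := by exact_mod_cast Fintype.card_pos
  rw [← sub_le_iff_le_add', le_div_iff₀ hcard]
  linarith

end FiniteSupport

/-! ### Reversible jump systems -/

/-- A reversible continuous-time Markov chain on `X` whose jumps are given by permutations: the
jump `a` takes `x` to `move a x` at rate `rate a x ∈ [1/2, 1]`, and the jump `reverse a` undoes it
at the same rate, so that counting measure is reversible. -/
structure JumpSystem (X A : Type*) where
  move : A → Equiv.Perm X
  reverse : Equiv.Perm A
  rate : A → X → ℝ
  move_reverse : ∀ a, move (reverse a) = (move a)⁻¹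
  rate_reverse : ∀ a x, rate (reverse a) (move a x) = rate a x
  half_le_rate : ∀ a x, 1 / 2 ≤ rate a x
  rate_le_one : ∀ a x, rate a x ≤ 1

namespace JumpSystem

variable {X A : Type*} (S : JumpSystem X A)

lemma rate_nonneg (a : A) (x : X) : 0 ≤ S.rate a x := by linarith [S.half_le_rate a x]

lemma move_reverse_move (a : A) (x : X) : S.move (S.reverse a) (S.move a x) = x := by
  simp [S.move_reverse]

lemma summable_mul_diff (u : FinSupp X) (f : X → ℝ) (a : A) :
    Summable fun x ↦ S.rate a x * (u (S.move a x) - u x) * f x := by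
  simpa only [FinSupp.sub_apply, FinSupp.comp_apply, mul_left_comm, mul_assoc] using
    (u.comp (S.move a) - u).summable_mul fun x ↦ S.rate a x * f x

lemma summable_rate_mul_diff_sq (u : FinSupp X) (a : A) :
    Summable fun x ↦ S.rate a x * ((u (S.move a x) - u x) * (u (S.move a x) - u x)) := by
  simpa only [mul_assoc] using S.summable_mul_diff u (fun x ↦ u (S.move a x) - u x) a

lemma tsum_rate_mul_diff_sq_le (u : FinSupp X) (a : A) :
    ∑' x, S.rate a x * ((u (S.move a x) - u x) * (u (S.move a x) - u x))
      ≤ l2Form X (u.comp (S.move a) - u) (u.comp (S.move a) - u) := by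
  refine Summable.tsum_le_tsum (fun x ↦ ?_) ?_ ?_
  · exact mul_le_of_le_one_left (mul_self_nonneg _) (S.rate_le_one a x)
  · exact S.summable_rate_mul_diff_sq u a
  · exact FinSupp.summable_mul _ _

lemma l2Form_diff_le_tsum (u : FinSupp X) (a : A) :
    l2Form X (u.comp (S.move a) - u) (u.comp (S.move a) - u)
      ≤ 2 * ∑' x, S.rate a x * ((u (S.move a x) - u x) * (u (S.move a x) - u x)) := by
  rw [← tsum_mul_left]
  refine Summable.tsum_le_tsum (fun x ↦ ?_) (FinSupp.summable_mul _ _)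
    ((S.summable_rate_mul_diff_sq u a).mul_left 2)
  rw [← mul_assoc]
  exact le_mul_of_one_le_left (mul_self_nonneg _) (by linarith [S.half_le_rate a x])

variable [Fintype A]

/-- The generator of the chain. -/
def gen : Module.End ℝ (X → ℝ) where
  toFun u x := ∑ a, S.rate a x * (u (S.move a x) - u x)
  map_add' u v := by
    funext x
    simp only [Pi.add_apply, ← Finset.sum_add_distrib]
    exact Finset.sum_congr rfl fun a _ ↦ by ring
  map_smul' c u := by
    funext x
    simp only [Pi.smul_apply, smul_eq_mul, RingHom.id_apply, Finset.mul_sum]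
    exact Finset.sum_congr rfl fun a _ ↦ by ring

lemma gen_apply (u : X → ℝ) (x : X) :
    S.gen u x = ∑ a, S.rate a x * (u (S.move a x) - u x) := rfl

lemma gen_mem_finSupp (u : X → ℝ) (hu : u ∈ finSuppSubmodule X) :
    S.gen u ∈ finSuppSubmodule X := by
  have h : S.gen u = ∑ a, S.rate a * (fun x ↦ u (S.move a x) - u x) := by
    ext x
    simp [gen_apply]
  rw [h]
  refine Submodule.sum_mem _ fun a _ ↦ ?_
  exact Set.Finite.subset ((FinSupp.comp ⟨u, hu⟩ (S.move a)) - ⟨u, hu⟩ : FinSupp X).2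
    (Function.support_mul_subset_right _ _)

/-- The generator restricted to finitely supported functions. -/
def finGen : Module.End ℝ (FinSupp X) := S.gen.restrict S.gen_mem_finSupp

lemma finGen_apply (u : FinSupp X) (x : X) : S.finGen u x = S.gen u x := rfl

lemma sum_tsum_reverse (F : A → X → ℝ) :
    ∑ a, ∑' x, F (S.reverse a) (S.move a x) = ∑ a, ∑' x, F a x := by
  rw [← Equiv.sum_comp S.reverse fun a ↦ ∑' x, F a x]
  exact Finset.sum_congr rfl fun a _ ↦ (S.move a).tsum_eq (F (S.reverse a))

/-- The Dirichlet form of the chain. -/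
def dirichlet (u f : X → ℝ) : ℝ :=
  1 / 2 * ∑ a, ∑' x, S.rate a x * ((u (S.move a x) - u x) * (f (S.move a x) - f x))

lemma dirichlet_comm (u v : X → ℝ) : S.dirichlet u v = S.dirichlet v u := by
  simp only [dirichlet, mul_comm (u _ - _)]

lemma dirichlet_self_nonneg (u : X → ℝ) : 0 ≤ S.dirichlet u u :=
  mul_nonneg (by norm_num) <| Finset.sum_nonneg fun a _ ↦ tsum_nonneg fun x ↦
    mul_nonneg (S.rate_nonneg a x) (mul_self_nonneg _)

lemma tsum_gen_mul (u : FinSupp X) (f : X → ℝ) :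
    ∑' x, S.gen u x * f x = -S.dirichlet u f := by
  set I : ℝ := ∑ a, ∑' x, S.rate a x * (u (S.move a x) - u x) * f x
  set J : ℝ := ∑ a, ∑' x, S.rate a x * (u (S.move a x) - u x) * f (S.move a x)
  have hI : ∑' x, S.gen u x * f x = I := by
    simp only [gen_apply, Finset.sum_mul]
    exact Summable.tsum_finsetSum fun a _ ↦ S.summable_mul_diff u f a
  have hJ : J = -I := by
    simp only [I, J, ← Finset.sum_neg_distrib, ← tsum_neg]
    rw [← S.sum_tsum_reverse fun a x ↦ -(S.rate a x * (u (S.move a x) - u x) * f x)]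
    simp only [S.rate_reverse, S.move_reverse_move]
    exact Finset.sum_congr rfl fun a _ ↦ tsum_congr fun x ↦ by ring
  have hdir : S.dirichlet u f = 1 / 2 * (J - I) := by
    simp only [I, J, ← Finset.sum_sub_distrib, dirichlet]
    congr! 2 with a
    rw [← (S.summable_mul_diff u (fun x ↦ f (S.move a x)) a).tsum_sub (S.summable_mul_diff u f a)]
    exact tsum_congr fun x ↦ by ring
  rw [hI, hdir, hJ]
  ring

lemma l2Form_finGen (u v : FinSupp X) : l2Form X (S.finGen u) v = -S.dirichlet u v :=
  S.tsum_gen_mul u v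

lemma tsum_finGen (u : FinSupp X) : ∑' x, S.finGen u x = 0 := by
  simpa [dirichlet, finGen_apply] using S.tsum_gen_mul u fun _ ↦ 1

/-- A common bound on the total jump rates. Twice the trivial bound `card A`, which makes the
one-step operator `step` positive semidefinite. -/
def clock (_ : JumpSystem X A) : ℝ := 2 * Fintype.card A

lemma clock_pos [Nonempty A] : 0 < S.clock :=
  mul_pos two_pos (by exact_mod_cast Fintype.card_pos)

/-- The one-step operator of the lazy discrete-time chain whose Poissonization at rate `clock` is
the continuous-time chain. -/
def step : Module.End ℝ (FinSupp X) := 1 + S.clock⁻¹ • S.finGen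

lemma step_apply (u : FinSupp X) (x : X) : S.step u x = u x + S.clock⁻¹ * S.gen u x := rfl

lemma tsum_step (u : FinSupp X) : ∑' x, S.step u x = ∑' x, u x := by
  have h := u.summable.tsum_add ((S.finGen u).summable.mul_left S.clock⁻¹)
  rwa [tsum_mul_left, tsum_finGen, mul_zero, add_zero] at h

lemma step_nonneg [Nonempty A] {u : FinSupp X} (hu : ∀ x, 0 ≤ u x) (x : X) :
    0 ≤ S.step u x := by
  have hgen : -(S.clock / 2 * u x) ≤ S.gen u x := by
    calc -(S.clock / 2 * u x) = ∑ _a : A, -u x := by simp [clock]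
      _ ≤ S.gen u x := Finset.sum_le_sum fun a _ ↦ by
        nlinarith [mul_nonneg (S.rate_nonneg a x) (hu (S.move a x)),
          mul_nonneg (sub_nonneg.mpr (S.rate_le_one a x)) (hu x)]
  have hscaled := mul_le_mul_of_nonneg_left hgen (inv_nonneg.mpr S.clock_pos.le)
  rw [mul_neg, ← mul_assoc, ← mul_div_assoc, inv_mul_cancel₀ S.clock_pos.ne'] at hscaled
  rw [step_apply]
  linarith [hu x]

lemma l2Form_step (u v : FinSupp X) :
    l2Form X (S.step u) v = l2Form X u v - S.clock⁻¹ * S.dirichlet u v := by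
  simp only [step, LinearMap.add_apply, LinearMap.smul_apply, map_add, map_smul,
    Module.End.one_apply, l2Form_finGen, smul_eq_mul]
  ring

lemma dirichlet_self_le (u : FinSupp X) : S.dirichlet u u ≤ S.clock * l2Form X u u := by
  have hmove (a : A) : ∑' x, S.rate a x * ((u (S.move a x) - u x) * (u (S.move a x) - u x))
      ≤ 4 * l2Form X u u := by
    refine (S.tsum_rate_mul_diff_sq_le u a).trans ?_
    have := l2Form_isPosSemidef.nonneg (u.comp (S.move a) + u)
    simp only [map_add, map_sub, LinearMap.add_apply, LinearMap.sub_apply, l2Form_comp_comp]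
      at this ⊢
    linarith
  calc S.dirichlet u u ≤ 1 / 2 * ∑ _a : A, 4 * l2Form X u u := by
        unfold dirichlet
        gcongr with a
        exact hmove a
    _ = S.clock * l2Form X u u := by
        simp only [Finset.sum_const, Finset.card_univ, nsmul_eq_mul, clock]
        ring

lemma isPosContraction_step [Nonempty A] : IsPosContraction (l2Form X) S.step where
  isSelfAdjoint u v := by
    rw [← l2Form_isPosSemidef.isSymm.eq (S.step v) u, l2Form_step, l2Form_step, dirichlet_comm,
      l2Form_isPosSemidef.isSymm.eq]
  form_nonneg u := by
    have := mul_le_mul_of_nonneg_left (S.dirichlet_self_le u) (inv_nonneg.mpr S.clock_pos.le)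
    rw [inv_mul_cancel_left₀ S.clock_pos.ne'] at this
    rw [l2Form_step]
    linarith
  form_le u := by
    rw [l2Form_step]
    have := mul_nonneg (inv_nonneg.mpr S.clock_pos.le) (S.dirichlet_self_nonneg u)
    linarith

/-- The permutation `g` is a product of about `n` jumps, quantified by the effect that a chain of
`n` jumps has on the `ℓ²` displacement. -/
def DisplacementLE (g : Equiv.Perm X) (n : ℕ) : Prop :=
  ∀ u : FinSupp X,
    √(l2Form X (u.comp g - u) (u.comp g - u)) ≤ 2 * n * √(S.dirichlet u u)

variable {S}

lemma displacementLE_one : S.DisplacementLE 1 0 := fun u ↦ by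
  have : u.comp 1 = u := rfl
  simp [this]

lemma displacementLE_move (a : A) : S.DisplacementLE (S.move a) 1 := fun u ↦ by
  have hsingle : ∑' x, S.rate a x * ((u (S.move a x) - u x) * (u (S.move a x) - u x))
      ≤ 2 * S.dirichlet u u := by
    rw [dirichlet, ← mul_assoc, mul_one_div_cancel two_ne_zero, one_mul]
    exact Finset.single_le_sum (f := fun a ↦ ∑' x, S.rate a x *
      ((u (S.move a x) - u x) * (u (S.move a x) - u x))) (fun a _ ↦ tsum_nonneg fun x ↦
      mul_nonneg (S.rate_nonneg a x) (mul_self_nonneg _)) (Finset.mem_univ a)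
  rw [Nat.cast_one, mul_one, ← Real.sqrt_sq (zero_le_two (α := ℝ)),
    ← Real.sqrt_mul (by positivity)]
  exact Real.sqrt_le_sqrt (by linarith [S.l2Form_diff_le_tsum u a])

lemma DisplacementLE.mono {g : Equiv.Perm X} {m n : ℕ} (hg : S.DisplacementLE g m) (hmn : m ≤ n) :
    S.DisplacementLE g n := fun u ↦ (hg u).trans (by gcongr)

lemma DisplacementLE.mul {g h : Equiv.Perm X} {m n : ℕ} (hg : S.DisplacementLE g m)
    (hh : S.DisplacementLE h n) : S.DisplacementLE (g * h) (m + n) := fun u ↦ by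
  have hsplit : u.comp (g * h) - u = (u.comp g - u).comp h + (u.comp h - u) := by
    refine DFunLike.ext _ _ fun x ↦ ?_
    simp [FinSupp.add_apply, FinSupp.sub_apply, FinSupp.comp_apply]
  rw [hsplit]
  refine (sqrt_form_add_le l2Form_isPosSemidef _ _).trans ?_
  rw [l2Form_comp_comp, Nat.cast_add]
  linarith [hg u, hh u]

lemma DisplacementLE.pow {g : Equiv.Perm X} {m : ℕ} (hg : S.DisplacementLE g m) (n : ℕ) :
    S.DisplacementLE (g ^ n) (n * m) := by
  induction n with
  | zero => simpa using displacementLE_one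
  | succ n ih =>
    rw [pow_succ, Nat.succ_mul]
    exact ih.mul hg

end JumpSystem

/-! ### Nash iteration and heat kernel bounds -/

section NashIteration

lemma le_two_mul_of_le_half_add {ψ : ℕ → ℝ} {A : ℝ} (h : ∀ n, ψ n ≤ ψ (n / 2) / 2 + A) (n : ℕ) :
    ψ n ≤ 2 * A := by
  induction n using Nat.strong_induction_on with
  | _ n ih =>
    rcases Nat.eq_zero_or_pos n with rfl | hn
    · have := h 0
      rw [Nat.zero_div] at this
      linarith
    · linarith [h n, ih (n / 2) (Nat.div_lt_self hn one_lt_two)]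

/-- The scale `R = ⌊ε √(n + 1)⌋` balances the two terms of the Nash recursion. -/
lemma nash_step {m : ℕ} {b C ε Φ Ψ : ℝ} (hb : 0 ≤ b) (hC : 0 ≤ C) (hΦ : 0 ≤ Φ) (hε : 0 < ε) (n : ℕ)
    (hn : 1 ≤ ε * √((n : ℝ) + 1))
    (hrec : ∀ R : ℕ, 1 ≤ R → Ψ ≤ b * (R : ℝ) ^ 2 / (n + 1) * Φ + C / (R : ℝ) ^ m) :
    Ψ ≤ b * ε ^ 2 * Φ + C * (2 / ε) ^ m / √((n : ℝ) + 1) ^ m := by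
  set q := √((n : ℝ) + 1)
  have hq : 0 < q := by positivity
  have hq2 : q ^ 2 = n + 1 := Real.sq_sqrt (by positivity)
  have hfloor : 1 ≤ ⌊ε * q⌋₊ := (Nat.one_le_floor_iff _).mpr hn
  set R : ℝ := (⌊ε * q⌋₊ : ℝ)
  have hR1 : 1 ≤ R := Nat.one_le_cast.mpr hfloor
  have hle : R ≤ ε * q := Nat.floor_le (by positivity)
  have hge : ε * q / 2 ≤ R := by linarith [Nat.lt_floor_add_one (ε * q)]
  refine (hrec _ hfloor).trans (add_le_add (mul_le_mul_of_nonneg_right ?_ hΦ) ?_)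
  · rw [div_le_iff₀ (by positivity), ← hq2]
    calc b * R ^ 2 ≤ b * (ε * q) ^ 2 := by gcongr
      _ = b * ε ^ 2 * q ^ 2 := by ring
  · calc C / R ^ m ≤ C / (ε * q / 2) ^ m := by gcongr
      _ = C * (2 / ε) ^ m / q ^ m := by
        rw [show ε * q / 2 = q / (2 / ε) by field_simp, div_pow]
        field_simp

lemma nash_halving_step {m : ℕ} {b C ε : ℝ} (hb : 0 ≤ b) (hC : 0 ≤ C) (hε : 0 < ε)
    (hεb : b * ε ^ 2 * √2 ^ m ≤ 1 / 2) {φ : ℕ → ℝ} (hanti : Antitone φ) (hφ : ∀ n, 0 ≤ φ n)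
    (hφ0 : φ 0 ≤ 1)
    (hrec : ∀ n R : ℕ, 1 ≤ R → φ (2 * n) ≤ b * (R : ℝ) ^ 2 / (n + 1) * φ n + C / (R : ℝ) ^ m)
    (n : ℕ) :
    φ n * √((n : ℝ) + 1) ^ m ≤ φ (n / 2) * √(((n / 2 : ℕ) : ℝ) + 1) ^ m / 2 +
      (C * (2 / ε) ^ m * √2 ^ m + (√2 / ε) ^ m) := by
  have hmono : φ n ≤ φ (2 * (n / 2)) := hanti (Nat.mul_div_le n 2)
  have hsqrt : √((n : ℝ) + 1) ≤ √2 * √(((n / 2 : ℕ) : ℝ) + 1) := by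
    rw [← Real.sqrt_mul zero_le_two]
    exact Real.sqrt_le_sqrt (by exact_mod_cast (by omega : n + 1 ≤ 2 * (n / 2 + 1)))
  set q := √(((n / 2 : ℕ) : ℝ) + 1) with hq_def
  have hq0 : 0 < q := by positivity
  have hΦ := hφ (n / 2)
  have hΦq : 0 ≤ φ (n / 2) * q ^ m := by positivity
  have hlargeTerm : 0 ≤ C * (2 / ε) ^ m * √2 ^ m := by positivity
  have hsmallTerm : 0 ≤ (√2 / ε) ^ m := by positivity
  rcases le_or_gt 1 (ε * q) with hlarge | hsmall
  · have hstep := hmono.trans (nash_step hb hC hΦ hε (n / 2) hlarge (hrec (n / 2)))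
    rw [← hq_def] at hstep
    calc φ n * √((n : ℝ) + 1) ^ m
        ≤ (b * ε ^ 2 * φ (n / 2) + C * (2 / ε) ^ m / q ^ m) * (√2 * q) ^ m := by gcongr
      _ = b * ε ^ 2 * √2 ^ m * (φ (n / 2) * q ^ m) + C * (2 / ε) ^ m * √2 ^ m := by
        rw [mul_pow]
        field_simp
      _ ≤ 1 / 2 * (φ (n / 2) * q ^ m) + C * (2 / ε) ^ m * √2 ^ m := by gcongr
      _ ≤ _ := by linarith
  · have hq : q ≤ 1 / ε := by
      rw [le_div_iff₀ hε]
      linarith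
    calc φ n * √((n : ℝ) + 1) ^ m ≤ 1 * (√2 * (1 / ε)) ^ m := by
          gcongr
          · exact (hanti (Nat.zero_le n)).trans hφ0
          · exact hsqrt.trans (by gcongr)
      _ ≤ _ := by
        rw [one_mul, mul_one_div]
        linarith

lemma exists_forall_mul_pow_le_of_nash_recursion (m : ℕ) {b C : ℝ} (hb : 0 ≤ b) (hC : 0 ≤ C) :
    ∃ A : ℝ, 0 < A ∧ ∀ φ : ℕ → ℝ, Antitone φ → (∀ n, 0 ≤ φ n) → φ 0 ≤ 1 →
      (∀ n R : ℕ, 1 ≤ R → φ (2 * n) ≤ b * (R : ℝ) ^ 2 / (n + 1) * φ n + C / (R : ℝ) ^ m) →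
      ∀ n : ℕ, φ n * √((n : ℝ) + 1) ^ m ≤ A := by
  obtain ⟨ε, hε, hεb⟩ : ∃ ε : ℝ, 0 < ε ∧ b * ε ^ 2 * √2 ^ m ≤ 1 / 2 := by
    refine ⟨√(1 / (2 * (b + 1) * √2 ^ m)), by positivity, ?_⟩
    rw [Real.sq_sqrt (by positivity)]
    field_simp
    linarith
  refine ⟨2 * (C * (2 / ε) ^ m * √2 ^ m + (√2 / ε) ^ m), by positivity, ?_⟩
  intro φ hanti hφ hφ0 hrec
  exact le_two_mul_of_le_half_add (nash_halving_step hb hC hε hεb hanti hφ hφ0 hrec)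

end NashIteration

namespace JumpSystem

open scoped Finset

variable {X A ι : Type*} [Fintype A] {S : JumpSystem X A} [Fintype ι]

/-- Volume growth of dimension `card ι`: for each `R` there are `R ^ card ι` permutations of
displacement at most `card ι * R`, at most `C` of which send a given point to another one. -/
def VolumeGrowth (S : JumpSystem X A) (ι : Type*) [Fintype ι] (C : ℝ) : Prop :=
  ∀ R : ℕ, 1 ≤ R → ∃ g : (ι → Fin R) → Equiv.Perm X,
    (∀ r, S.DisplacementLE (g r) (Fintype.card ι * R)) ∧ ∀ x y, (#{r | g r x = y} : ℝ) ≤ C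

lemma VolumeGrowth.l2Form_self_le {C : ℝ} (h : S.VolumeGrowth ι C) {u : FinSupp X}
    (hu : ∀ x, 0 ≤ u x) (hu1 : ∑' x, u x = 1) {R : ℕ} (hR : 1 ≤ R) :
    l2Form X u u
      ≤ 2 * (Fintype.card ι * R) ^ 2 * S.dirichlet u u + C / (R : ℝ) ^ Fintype.card ι := by
  obtain ⟨g, hg, hcard⟩ := h R hR
  have : Nonempty (Fin R) := ⟨⟨0, hR⟩⟩
  have hD (r) : l2Form X (u.comp (g r) - u) (u.comp (g r) - u)
      ≤ (2 * (Fintype.card ι * R)) ^ 2 * S.dirichlet u u := by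
    have := (Real.sqrt_le_left (by positivity)).mp (hg r u)
    rwa [mul_pow, Real.sq_sqrt (S.dirichlet_self_nonneg u), Nat.cast_mul] at this
  have hle := l2Form_self_le_of_translates hcard hu hu1 hD
  rw [Fintype.card_fun, Fintype.card_fin, Nat.cast_pow] at hle
  linarith

/-- The `n`-step transition probabilities to `y` of the chain with one-step operator `step`. -/
def kernel (S : JumpSystem X A) (n : ℕ) (y : X) : FinSupp X := (S.step ^ n) (FinSupp.delta y)

lemma kernel_zero (y : X) : S.kernel 0 y = FinSupp.delta y := rfl

lemma step_pow_kernel (n j : ℕ) (y : X) : (S.step ^ j) (S.kernel n y) = S.kernel (j + n) y := by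
  rw [kernel, kernel, pow_add, Module.End.mul_apply]

lemma kernel_succ (n : ℕ) (y : X) : S.kernel (n + 1) y = S.step (S.kernel n y) := by
  rw [kernel, kernel, pow_succ', Module.End.mul_apply]

lemma tsum_kernel (n : ℕ) (y : X) : ∑' x, S.kernel n y x = 1 := by
  induction n with
  | zero => simp [kernel_zero, FinSupp.delta_apply]
  | succ n ih => rw [kernel_succ, tsum_step, ih]

variable [Nonempty A]

lemma kernel_nonneg (n : ℕ) (x y : X) : 0 ≤ S.kernel n y x := by
  induction n generalizing x with
  | zero =>
    rw [kernel_zero, FinSupp.delta_apply]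
    positivity
  | succ n ih =>
    rw [kernel_succ]
    exact S.step_nonneg ih x

lemma l2Form_kernel (n : ℕ) (x : X) (u : FinSupp X) :
    l2Form X (S.kernel n x) u = (S.step ^ n) u x := by
  have hpow := S.isPosContraction_step.form_pow_pow
  have hshift := hpow 0 n (FinSupp.delta x) u
  rw [zero_add, ← add_zero n, ← hpow] at hshift
  simpa [kernel, l2Form_delta] using hshift.symm

lemma l2Form_kernel_kernel (i j : ℕ) (x y : X) :
    l2Form X (S.kernel i x) (S.kernel j y) = S.kernel (i + j) y x := by
  rw [l2Form_kernel, step_pow_kernel]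

lemma abs_kernel_add_le (i j : ℕ) (x y : X) :
    |S.kernel (i + j) y x| ≤ √(S.kernel (i + i) x x) * √(S.kernel (j + j) y y) := by
  simpa only [l2Form_kernel_kernel] using
    abs_form_le l2Form_isPosSemidef (S.kernel i x) (S.kernel j y)

lemma succ_mul_abs_kernel_sub_le (i j : ℕ) (x y : X) :
    ((i : ℝ) + 1) * |S.kernel (i + i + j) y x - S.kernel (i + i + j + 1) y x|
      ≤ √(S.kernel (i + i) x x) * √(S.kernel (j + j) y y) := by
  set u := S.kernel j y
  set w := (S.step ^ i) (u - S.step u)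
  have hspec : ((i : ℝ) + 1) * √(l2Form X w w) ≤ √(S.kernel (j + j) y y) := by
    rw [← l2Form_kernel_kernel]
    refine Real.le_sqrt_of_sq_le ?_
    rw [mul_pow, Real.sq_sqrt (l2Form_isPosSemidef.nonneg w)]
    exact S.isPosContraction_step.succ_sq_mul_form_pow_sub_le l2Form_isPosSemidef u i
  have hdiff : l2Form X (S.kernel i x) w
      = S.kernel (i + i + j) y x - S.kernel (i + i + j + 1) y x := by
    rw [l2Form_kernel, ← Module.End.mul_apply, ← pow_add, map_sub, ← kernel_succ, step_pow_kernel,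
      step_pow_kernel, FinSupp.sub_apply, add_assoc (i + i)]
  calc ((i : ℝ) + 1) * |S.kernel (i + i + j) y x - S.kernel (i + i + j + 1) y x|
      ≤ ((i : ℝ) + 1) * (√(S.kernel (i + i) x x) * √(l2Form X w w)) := by
        rw [← hdiff, ← l2Form_kernel_kernel]
        gcongr
        exact abs_form_le l2Form_isPosSemidef _ _
    _ = √(S.kernel (i + i) x x) * (((i : ℝ) + 1) * √(l2Form X w w)) := by ring
    _ ≤ _ := by gcongr

lemma succ_mul_dirichlet_step_pow_le (u : FinSupp X) (n : ℕ) :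
    ((n : ℝ) + 1) * S.dirichlet ((S.step ^ n) u) ((S.step ^ n) u) ≤ S.clock * l2Form X u u := by
  have h := S.isPosContraction_step.succ_mul_form_pow_sub_le l2Form_isPosSemidef u (n + n)
  rw [← S.isPosContraction_step.form_pow_pow, add_right_comm,
    ← S.isPosContraction_step.form_pow_pow, pow_succ', Module.End.mul_apply, l2Form_step,
    sub_sub_cancel, mul_left_comm, inv_mul_le_iff₀ S.clock_pos] at h
  refine le_trans ?_ h
  push_cast
  nlinarith [S.dirichlet_self_nonneg ((S.step ^ n) u), (n.cast_nonneg : (0 : ℝ) ≤ n)]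

lemma VolumeGrowth.nash_recursion {C : ℝ} (h : S.VolumeGrowth ι C) (y : X) (n : ℕ) {R : ℕ}
    (hR : 1 ≤ R) :
    l2Form X (S.kernel (2 * n) y) (S.kernel (2 * n) y)
      ≤ 2 * Fintype.card ι ^ 2 * S.clock * (R : ℝ) ^ 2 / (n + 1)
          * l2Form X (S.kernel n y) (S.kernel n y) + C / (R : ℝ) ^ Fintype.card ι := by
  have hdir := S.succ_mul_dirichlet_step_pow_le (S.kernel n y) n
  rw [step_pow_kernel, ← two_mul, mul_comm, ← le_div_iff₀ (by positivity)] at hdir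
  refine (h.l2Form_self_le (fun x ↦ S.kernel_nonneg _ x y) (S.tsum_kernel _ y) hR).trans ?_
  gcongr ?_ + _
  calc 2 * (Fintype.card ι * R : ℝ) ^ 2 * S.dirichlet (S.kernel (2 * n) y) (S.kernel (2 * n) y)
      ≤ 2 * (Fintype.card ι * R : ℝ) ^ 2
          * (S.clock * l2Form X (S.kernel n y) (S.kernel n y) / (n + 1)) := by gcongr
    _ = _ := by ring

lemma VolumeGrowth.exists_kernel_diag_le {C : ℝ} (hC : 0 ≤ C) (h : S.VolumeGrowth ι C) :
    ∃ M : ℝ, 0 < M ∧ ∀ (n j : ℕ) (y : X), n + 1 ≤ 3 * (j + 1) →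
      S.kernel (j + j) y y ≤ M * ((n : ℝ) + 1) ^ (-(Fintype.card ι / 2) : ℝ) := by
  have hclock := S.clock_pos
  set m := Fintype.card ι
  obtain ⟨A, hA, hdecay⟩ := exists_forall_mul_pow_le_of_nash_recursion m
    (b := 2 * m ^ 2 * S.clock) (by positivity) hC
  refine ⟨A * (1 / 3) ^ (-(m / 2) : ℝ), by positivity, fun n j y hnj ↦ ?_⟩
  have hanti : Antitone fun n ↦ l2Form X (S.kernel n y) (S.kernel n y) := by
    simp only [kernel, S.isPosContraction_step.form_pow_pow]
    exact fun i j hij ↦ S.isPosContraction_step.form_pow_antitone _ (add_le_add hij hij)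
  have hdiag := hdecay _ hanti (fun _ ↦ l2Form_isPosSemidef.nonneg _)
    (by simp [kernel_zero, l2Form_delta, FinSupp.delta_apply]) (fun n R ↦ h.nash_recursion y n) j
  have hthird : 1 / 3 * ((n : ℝ) + 1) ≤ j + 1 := by
    have : (n : ℝ) + 1 ≤ 3 * (j + 1) := by exact_mod_cast hnj
    linarith
  rw [l2Form_kernel_kernel, Real.sqrt_eq_rpow, ← Real.rpow_mul_natCast (by positivity),
    one_div_mul_eq_div, ← le_div_iff₀ (by positivity)] at hdiag
  calc S.kernel (j + j) y y ≤ A / ((j : ℝ) + 1) ^ (m / 2 : ℝ) := hdiag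
    _ = A * ((j : ℝ) + 1) ^ (-(m / 2) : ℝ) := by rw [Real.rpow_neg (by positivity), div_eq_mul_inv]
    _ ≤ A * (1 / 3 * ((n : ℝ) + 1)) ^ (-(m / 2) : ℝ) := by
      refine mul_le_mul_of_nonneg_left ?_ hA.le
      exact Real.rpow_le_rpow_of_nonpos (by positivity) hthird (neg_nonpos.mpr (by positivity))
    _ = _ := by rw [Real.mul_rpow (by positivity) (by positivity), mul_assoc]

/-- Both bounds follow from the on-diagonal one by Cauchy–Schwarz; the one on the time derivative
also uses the spectral estimate `succ_sq_mul_form_pow_sub_le` on a third of the time. -/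
theorem VolumeGrowth.exists_kernel_le {C : ℝ} (hC : 0 ≤ C) (h : S.VolumeGrowth ι C) :
    ∃ M : ℝ, 0 < M ∧ ∀ (n : ℕ) (x y : X),
      |S.kernel n y x| ≤ M * ((n : ℝ) + 1) ^ (-(Fintype.card ι / 2) : ℝ) ∧
      |S.gen (S.kernel n y) x| ≤ M * ((n : ℝ) + 1) ^ (-(Fintype.card ι / 2) : ℝ) / (n + 1) := by
  have hclock := S.clock_pos
  obtain ⟨M, hM, hdiag⟩ := h.exists_kernel_diag_le hC
  refine ⟨M + 3 * S.clock * M, by positivity, fun n x y ↦ ?_⟩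
  set s := ((n : ℝ) + 1) ^ (-(Fintype.card ι / 2) : ℝ)
  have hs : 0 ≤ s := by positivity
  have hsqrt (i j : ℕ) (hi : n + 1 ≤ 3 * (i + 1)) (hj : n + 1 ≤ 3 * (j + 1)) :
      √(S.kernel (i + i) x x) * √(S.kernel (j + j) y y) ≤ M * s := by
    calc √(S.kernel (i + i) x x) * √(S.kernel (j + j) y y) ≤ √(M * s) * √(M * s) := by
          gcongr
          · exact hdiag n i x hi
          · exact hdiag n j y hj
      _ = M * s := Real.mul_self_sqrt (by positivity)
  constructor
  · have hle := (S.abs_kernel_add_le (n / 2) (n - n / 2) x y).trans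
      (hsqrt _ _ (by omega) (by omega))
    rw [Nat.add_sub_of_le (Nat.div_le_self n 2)] at hle
    have : 0 ≤ 3 * S.clock * M * s := by positivity
    linarith
  · set i := n / 3
    have hle := (S.succ_mul_abs_kernel_sub_le i (n - (i + i)) x y).trans
      (hsqrt _ _ (by omega) (by omega))
    rw [Nat.add_sub_of_le (by omega)] at hle
    have hgen : S.gen (S.kernel n y) x = -(S.clock * (S.kernel n y x - S.kernel (n + 1) y x)) := by
      rw [kernel_succ, step_apply]
      field_simp
      ring
    have hi : (n : ℝ) + 1 ≤ 3 * (i + 1) := by exact_mod_cast (by omega : n + 1 ≤ 3 * (i + 1))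
    rw [hgen, abs_neg, abs_mul, abs_of_pos hclock, le_div_iff₀ (by positivity)]
    calc S.clock * |S.kernel n y x - S.kernel (n + 1) y x| * (n + 1)
        ≤ S.clock * |S.kernel n y x - S.kernel (n + 1) y x| * (3 * (i + 1)) := by gcongr
      _ = 3 * S.clock * ((i + 1) * |S.kernel n y x - S.kernel (n + 1) y x|) := by ring
      _ ≤ 3 * S.clock * (M * s) := by gcongr
      _ ≤ (M + 3 * S.clock * M) * s := by nlinarith [mul_nonneg hM.le hs]

end JumpSystem

/-! ### The labelled exclusion process as a jump system -/

/-- The `2 * d` directions of `ℤ^d`, given by an axis and a sign. -/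
abbrev Dir (d : ℕ) := Fin d × ℤˣ

namespace Dir

variable {d : ℕ}

/-- The unit vector pointing in a direction. -/
def vec (p : Dir d) : Fin d → ℤ := Pi.single p.1 p.2

/-- The opposite direction. -/
def opp : Equiv.Perm (Dir d) := Equiv.prodCongr (Equiv.refl _) (Equiv.neg ℤˣ)

lemma vec_opp (p : Dir d) : p.opp.vec = -p.vec := by
  simp [vec, opp, Pi.single_neg]

lemma vec_ne_zero (p : Dir d) : p.vec ≠ 0 := by
  simp [vec]

lemma vec_injective : Function.Injective (vec : Dir d → Fin d → ℤ) := by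
  rintro ⟨a, s⟩ ⟨b, s'⟩ h
  have hab : a = b := by
    by_contra hab
    simpa [vec, Pi.single_apply, hab] using congrFun h a
  subst hab
  simpa [vec, Units.val_inj] using h

end Dir

section Hop

variable {d k : ℕ} (l : Fin k) (v : Fin d → ℤ)

/-- Particle `l` jumps by `v`, exchanging places with the particle at the target, if any. -/
def hop (x : Conf d k) : Conf d k := fun j ↦ Equiv.swap (x l) (x l + v) (x j)

lemma hop_mem_SSet {x : Conf d k} (hx : x ∈ SSet d k) : hop l v x ∈ SSet d k :=
  fun i j hij h ↦ hx i j hij ((Equiv.swap _ _).injective h)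

lemma hop_apply_self (x : Conf d k) : hop l v x l = x l + v := Equiv.swap_apply_left _ _

lemma hop_neg_hop (x : Conf d k) : hop l (-v) (hop l v x) = x := by
  ext1 j
  rw [hop, hop_apply_self, add_neg_cancel_right, Equiv.swap_comm]
  exact Equiv.swap_apply_self _ _ _

variable {l v}

lemma hop_eq_add_single {x : Conf d k} (hx : x ∈ SSet d k) (hfree : x l + v ∉ Set.range x) :
    hop l v x = x + Pi.single l v := by
  ext1 j
  by_cases hj : j = l
  · subst hj
    simp [hop_apply_self]
  · rw [Pi.add_apply, Pi.single_eq_of_ne hj, add_zero]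
    exact Equiv.swap_apply_of_ne_of_ne (hx j l hj) fun h ↦ hfree ⟨j, h⟩

lemma hop_eq_cswap {x : Conf d k} (hx : x ∈ SSet d k) {j : Fin k} (hj : x l + v = x j) :
    hop l v x = cswap l j x := by
  ext1 i
  rw [hop, hj, cswap, Function.comp_apply]
  exact (Function.Injective.map_swap (fun i j ↦ not_imp_not.mp (hx i j)) l j i).symm

lemma cswap_eq_add_single_sub_single {x : Conf d k} {j : Fin k} (hj : x l + v = x j) :
    cswap l j x = x + Pi.single l v - Pi.single j v := by
  have hv : v = x j - x l := by rw [← hj, add_sub_cancel_left]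
  ext1 i
  simp only [cswap, Function.comp_apply, Equiv.swap_apply_def, Pi.add_apply, Pi.sub_apply,
    Pi.single_apply]
  split_ifs <;> simp_all

variable (l v)

/-- `hop` as a permutation of `𝕊^k`. -/
def hopPerm : Equiv.Perm (SSet d k) where
  toFun x := ⟨hop l v x, hop_mem_SSet l v x.2⟩
  invFun x := ⟨hop l (-v) x, hop_mem_SSet l (-v) x.2⟩
  left_inv x := Subtype.ext (hop_neg_hop l v x)
  right_inv x := Subtype.ext (by simpa using hop_neg_hop l (-v) x)

lemma hopPerm_neg : (hopPerm l (-v) : Equiv.Perm (SSet d k)) = (hopPerm l v)⁻¹ :=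
  Equiv.ext fun _ ↦ rfl

lemma hop_add_neg_mem_range_iff (x : Conf d k) :
    hop l v x l + -v ∈ Set.range (hop l v x) ↔ x l + v ∈ Set.range x := by
  refine exists_congr fun j ↦ ?_
  rw [hop_apply_self, add_neg_cancel_right, hop, Equiv.swap_apply_eq_iff, Equiv.swap_apply_left]

lemma hopPerm_pow_apply_self (r : ℕ) (x : SSet d k) :
    ((hopPerm l v ^ r) x).1 l = x.1 l + r • v := by
  induction r with
  | zero => simp
  | succ r ih =>
    rw [pow_succ', Equiv.Perm.mul_apply, succ_nsmul, ← add_assoc, ← ih]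
    exact hop_apply_self l v _

variable {v}

/-- While particle `l` moves along a line, every other particle is exchanged with it at most once:
after the exchange it is behind particle `l`. -/
lemma hopPerm_pow_apply_of_ne (hv : v ≠ 0) (r : ℕ) (x : SSet d k) {j : Fin k} (hj : j ≠ l) :
    ((hopPerm l v ^ r) x).1 j = x.1 j ∨
      ((hopPerm l v ^ r) x).1 j = x.1 j - v ∧ ∃ m < r, x.1 j - v = x.1 l + m • v := by
  induction r with
  | zero => simp
  | succ r ih =>
    have hself := hopPerm_pow_apply_self l v r x
    rw [pow_succ', Equiv.Perm.mul_apply]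
    set y := (hopPerm l v ^ r) x
    change hop l v y j = _ ∨ hop l v y j = _ ∧ _
    by_cases htarget : y.1 j = y.1 l + v
    · have hyj : hop l v y j = y.1 l := by rw [hop, htarget, Equiv.swap_apply_right]
      rcases ih with h | ⟨h, m, hm, hmv⟩
      · have hsub : x.1 j - v = x.1 l + r • v := by rw [← h, htarget, add_sub_cancel_right, hself]
        exact .inr ⟨by rw [hyj, hself, hsub], r, r.lt_succ_self, hsub⟩
      · rw [h, hmv, hself, add_assoc, ← succ_nsmul, add_left_cancel_iff] at htarget
        simp only [← natCast_zsmul] at htarget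
        exact absurd (smul_left_injective ℤ hv htarget) (by lia)
    · rw [hop, Equiv.swap_apply_of_ne_of_ne (y.2 j l hj) htarget]
      exact ih.imp_right fun ⟨h, m, hm, hmv⟩ ↦ ⟨h, m, hm.trans r.lt_succ_self, hmv⟩

end Hop

section Exclusion

variable {d k : ℕ}

/-- The labelled exclusion process. An exchange of two neighbouring particles is a hop of each of
them, hence the rate `1 / 2` of a hop to an occupied site. -/
def exclusion (d k : ℕ) : JumpSystem (SSet d k) (Fin k × Dir d) where
  move a := hopPerm a.1 a.2.vec
  reverse := Equiv.prodCongr (Equiv.refl _) Dir.opp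
  rate a x := if x.1 a.1 + a.2.vec ∈ Set.range x.1 then 1 / 2 else 1
  move_reverse a := by
    rw [← hopPerm_neg, ← Dir.vec_opp]
    rfl
  rate_reverse a x := by
    refine if_congr ?_ rfl rfl
    rw [← hop_add_neg_mem_range_iff a.1, ← Dir.vec_opp]
    rfl
  half_le_rate a x := by split_ifs <;> norm_num
  rate_le_one a x := by split_ifs <;> norm_num

/-- The composition, over the coordinates `q` in the list, of `r q` hops of particle `q.1` in the
positive direction of axis `q.2`. -/
def hopAlong (r : Fin k × Fin d → ℕ) (L : List (Fin k × Fin d)) : Equiv.Perm (SSet d k) :=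
  (L.map fun q ↦ hopPerm q.1 (Dir.vec (q.2, 1)) ^ r q).prod

lemma displacementLE_hopAlong {r : Fin k × Fin d → ℕ} {R : ℕ} (hr : ∀ q, r q ≤ R)
    (L : List (Fin k × Fin d)) : (exclusion d k).DisplacementLE (hopAlong r L) (L.length * R) := by
  induction L with
  | nil => simpa [hopAlong] using JumpSystem.displacementLE_one
  | cons q L ih =>
    have hq : (exclusion d k).DisplacementLE (hopPerm q.1 (Dir.vec (q.2, 1)) ^ r q) R :=
      ((JumpSystem.displacementLE_move (q.1, (q.2, 1))).pow (r q)).mono (by simpa using hr q)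
    rw [hopAlong, List.map_cons, List.prod_cons, List.length_cons, add_one_mul, add_comm]
    exact hq.mul ih

lemma abs_hopPerm_pow_sub_le (q q' : Fin k × Fin d) (r : ℕ) (x : SSet d k) :
    |((hopPerm q.1 (Dir.vec (q.2, 1)) ^ r) x).1 q'.1 q'.2 - x.1 q'.1 q'.2
      - (if q' = q then (r : ℤ) else 0)| ≤ 1 := by
  obtain ⟨l, a⟩ := q
  obtain ⟨j, b⟩ := q'
  by_cases hj : j = l
  · subst hj
    rw [hopPerm_pow_apply_self]
    by_cases hb : b = a <;> simp [Dir.vec, hb]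
  · rcases hopPerm_pow_apply_of_ne l (Dir.vec_ne_zero (a, 1)) r x hj with h | ⟨h, -⟩
    · simp [h, hj]
    · rw [h]
      by_cases hb : b = a <;> simp [hj, Dir.vec, hb]

lemma abs_hopAlong_sub_le (r : Fin k × Fin d → ℕ) {L : List (Fin k × Fin d)} (hL : L.Nodup)
    (x : SSet d k) (q : Fin k × Fin d) :
    |(hopAlong r L x).1 q.1 q.2 - x.1 q.1 q.2 - (if q ∈ L then (r q : ℤ) else 0)| ≤ L.length := by
  induction L with
  | nil => simp [hopAlong]
  | cons q' L ih =>
    obtain ⟨hq', hL⟩ := List.nodup_cons.mp hL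
    have hstep := abs_hopPerm_pow_sub_le q' q (r q') (hopAlong r L x)
    have hite : (if q ∈ q' :: L then (r q : ℤ) else 0)
        = (if q = q' then (r q' : ℤ) else 0) + if q ∈ L then (r q : ℤ) else 0 := by
      by_cases hq : q = q'
      · subst hq
        simp [hq']
      · simp [hq]
    rw [hite, List.length_cons, Nat.cast_succ]
    change |((hopPerm q'.1 (Dir.vec (q'.2, 1)) ^ r q') (hopAlong r L x)).1 q.1 q.2 - _ - _| ≤ _
    have := ih hL
    rw [abs_le] at *
    constructor <;> linarith

open scoped Finset in
lemma card_hopAlong_eq_le (R : ℕ) (x y : SSet d k) :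
    #{r : Fin k × Fin d → Fin R | hopAlong (fun q ↦ r q) Finset.univ.toList x = y}
      ≤ (2 * (k * d) + 1) ^ (k * d) := by
  set box : Finset (Fin k × Fin d → ℤ) := Fintype.piFinset fun q ↦
    Finset.Icc (y.1 q.1 q.2 - x.1 q.1 q.2 - (k * d : ℕ)) (y.1 q.1 q.2 - x.1 q.1 q.2 + (k * d : ℕ))
  have hbox : #box = (2 * (k * d) + 1) ^ (k * d) := by
    have hIcc (c : ℤ) : #(Finset.Icc (c - (k * d : ℕ)) (c + (k * d : ℕ))) = 2 * (k * d) + 1 := by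
      rw [Int.card_Icc]
      lia
    simp only [box, Fintype.card_piFinset, hIcc, Finset.prod_const, Finset.card_univ,
      Fintype.card_prod, Fintype.card_fin]
  rw [← hbox]
  refine Finset.card_le_card_of_injOn (fun r q ↦ (r q : ℤ)) (fun r hr ↦ ?_) fun r _ r' _ h ↦ ?_
  · refine Fintype.mem_piFinset.mpr fun q ↦ ?_
    have herr := abs_hopAlong_sub_le (fun q ↦ (r q : ℕ)) (Finset.nodup_toList Finset.univ) x q
    rw [(Finset.mem_filter.mp hr).2, if_pos (by simp), Finset.length_toList, Finset.card_univ,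
      Fintype.card_prod, Fintype.card_fin, Fintype.card_fin, abs_le] at herr
    rw [Finset.mem_Icc]
    lia
  · ext q
    exact Int.natCast_inj.mp (congrFun h q)

theorem exclusion_volumeGrowth (d k : ℕ) :
    (exclusion d k).VolumeGrowth (Fin k × Fin d) ((2 * (k * d) + 1) ^ (k * d)) := by
  refine fun R _ ↦ ⟨fun r ↦ hopAlong (fun q ↦ r q) Finset.univ.toList, fun r ↦ ?_, fun x y ↦ ?_⟩
  · simpa using displacementLE_hopAlong (fun q ↦ (r q).2.le) Finset.univ.toList
  · have hcard := card_hopAlong_eq_le R x y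
    rify at hcard
    refine le_trans (le_of_eq ?_) hcard
    congr!

end Exclusion

/-! ### The generator: nearest neighbours and contacts -/

lemma sum_sq_eq_one_iff {ι : Type*} [Fintype ι] [DecidableEq ι] (z : ι → ℤ) :
    ∑ i, z i ^ 2 = 1 ↔ ∃ i, ∃ s : ℤˣ, z = Pi.single i (s : ℤ) := by
  refine ⟨fun h ↦ ?_, ?_⟩
  · obtain ⟨i, -, hi⟩ := Finset.exists_ne_zero_of_sum_ne_zero (h.trans_ne one_ne_zero)
    have hsplit := Finset.add_sum_erase Finset.univ (fun i ↦ z i ^ 2) (Finset.mem_univ i)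
    have hrest : 0 ≤ ∑ j ∈ Finset.univ.erase i, z j ^ 2 := Finset.sum_nonneg fun j _ ↦ sq_nonneg _
    have hi_pos : 0 < z i ^ 2 := by positivity
    have hi_one : z i ^ 2 = 1 := by lia
    have hzero : ∀ j, j ≠ i → z j = 0 := by
      have hrest_zero : ∑ j ∈ Finset.univ.erase i, z j ^ 2 = 0 := by lia
      rw [Finset.sum_eq_zero_iff_of_nonneg fun j _ ↦ sq_nonneg _] at hrest_zero
      simpa using hrest_zero
    obtain ⟨s, hs⟩ := IsUnit.of_pow_eq_one hi_one two_ne_zero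
    refine ⟨i, s, funext fun j ↦ ?_⟩
    by_cases hj : j = i
    · rw [hj, Pi.single_eq_same, hs]
    · rw [Pi.single_eq_of_ne hj, hzero j hj]
  · rintro ⟨i, s, rfl⟩
    simp [Pi.single_apply, ← Units.val_pow_eq_pow_val]

section Neighbours

variable {d k : ℕ}

lemma vnorm_eq_one_iff (v : Fin d → ℤ) : vnorm v = 1 ↔ ∃ p : Dir d, p.vec = v := by
  rw [vnorm, Real.sqrt_eq_one]
  norm_cast
  simp only [sum_sq_eq_one_iff, Prod.exists, Dir.vec, eq_comm (b := v)]

/-- The configuration which is a unit vector in one particle and vanishes in the others. -/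
def unitStep (a : Fin k × Dir d) : Conf d k := Pi.single a.1 a.2.vec

lemma unitStep_injective : Function.Injective (unitStep : Fin k × Dir d → Conf d k) := by
  rintro ⟨i, p⟩ ⟨j, q⟩ h
  have hij : i = j := by
    by_contra hij
    exact p.vec_ne_zero (by simpa [unitStep, hij] using congrFun h i)
  subst hij
  exact congrArg _ (Dir.vec_injective (Pi.single_injective i h))

lemma unitStep_opp (i : Fin k) (p : Dir d) : unitStep (i, p.opp) = -unitStep (i, p) := by
  rw [unitStep, unitStep, Dir.vec_opp, Pi.single_neg]

lemma cnorm_eq_one_iff (z : Conf d k) : cnorm z = 1 ↔ ∃ a, unitStep a = z := by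
  have hsingle (i : Fin k) (b : Fin d) (s : ℤˣ) :
      (fun q : Fin k × Fin d ↦ z q.1 q.2) = Pi.single (i, b) (s : ℤ) ↔ unitStep (i, b, s) = z := by
    simp only [funext_iff, Prod.forall, unitStep, Dir.vec, Pi.single_apply, Prod.mk.injEq, ite_and,
      ite_apply, Pi.zero_apply, eq_comm]
  rw [cnorm, Real.sqrt_eq_one]
  norm_cast
  rw [← Fintype.sum_prod_type' fun i j ↦ z i j ^ 2,
    sum_sq_eq_one_iff fun q : Fin k × Fin d ↦ z q.1 q.2]
  simp only [Prod.exists, hsingle]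

lemma tsum_cnorm_sub_eq_one (φ : Conf d k → ℝ) (x : Conf d k) :
    ∑' y, (if cnorm (y - x) = 1 then φ y else 0) = ∑ a, φ (x + unitStep a) := by
  have hinj : Function.Injective fun a : Fin k × Dir d ↦ x + unitStep a :=
    (add_right_injective x).comp unitStep_injective
  have hsupp : Function.support (fun y ↦ if cnorm (y - x) = 1 then φ y else 0)
      ⊆ Set.range fun a : Fin k × Dir d ↦ x + unitStep a := by
    intro y hy
    obtain ⟨a, ha⟩ := (cnorm_eq_one_iff _).mp (ite_ne_right_iff.mp hy).1
    exact ⟨a, by simp [ha]⟩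
  rw [← hinj.tsum_eq hsupp, tsum_fintype]
  refine Finset.sum_congr rfl fun a _ ↦ if_pos ?_
  rw [add_sub_cancel_left]
  exact (cnorm_eq_one_iff _).mpr ⟨a, rfl⟩

lemma Lrw_eq_sum (f : Conf d k → ℝ) (x : Conf d k) :
    Lrw f x = ∑ a, (f (x + unitStep a) - f x) := tsum_cnorm_sub_eq_one (fun y ↦ f y - f x) x

lemma add_unitStep_mem_SSet_iff {x : Conf d k} (hx : x ∈ SSet d k) (a : Fin k × Dir d) :
    x + unitStep a ∈ SSet d k ↔ x a.1 + a.2.vec ∉ Set.range x := by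
  refine ⟨?_, fun hfree ↦ ?_⟩
  · rintro hmem ⟨j, hj⟩
    have hne : j ≠ a.1 := by
      rintro rfl
      exact a.2.vec_ne_zero (by simpa using hj)
    exact hmem a.1 j hne.symm (by simp [unitStep, hj, hne])
  · rw [unitStep, ← hop_eq_add_single hx hfree]
    exact hop_mem_SSet _ _ hx

end Neighbours

section Contacts

variable {d k : ℕ} {x : Conf d k}

/-- The pairs `((i, p), j)` such that particle `j` is the neighbour of particle `i` in
direction `p`. -/
def contacts (x : Conf d k) : Finset ((Fin k × Dir d) × Fin k) :=
  {c | x c.1.1 + c.1.2.vec = x c.2}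

lemma mem_contacts {c : (Fin k × Dir d) × Fin k} :
    c ∈ contacts x ↔ x c.1.1 + c.1.2.vec = x c.2 := by
  simp [contacts]

lemma ne_of_mem_contacts {c : (Fin k × Dir d) × Fin k} (hc : c ∈ contacts x) : c.1.1 ≠ c.2 := by
  intro h
  rw [mem_contacts, h] at hc
  exact c.1.2.vec_ne_zero (by simpa using hc)

lemma sum_contacts (φ : Fin k → Dir d → Fin k → ℝ) :
    ∑ c ∈ contacts x, φ c.1.1 c.1.2 c.2
      = ∑ a : Fin k × Dir d, ∑ j, if x a.1 + a.2.vec = x j then φ a.1 a.2 j else 0 := by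
  rw [contacts, Finset.sum_filter, Fintype.sum_prod_type]

lemma sum_contacts_flip (φ : Fin k → Dir d → Fin k → ℝ) :
    ∑ c ∈ contacts x, φ c.2 c.1.2.opp c.1.1 = ∑ c ∈ contacts x, φ c.1.1 c.1.2 c.2 := by
  have hmaps (c) (hc : c ∈ contacts x) : ((c.2, c.1.2.opp), c.1.1) ∈ contacts x := by
    rw [mem_contacts] at hc ⊢
    simp [Dir.vec_opp, ← hc]
  refine Finset.sum_nbij' (fun c ↦ ((c.2, c.1.2.opp), c.1.1)) (fun c ↦ ((c.2, c.1.2.opp), c.1.1))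
    hmaps hmaps ?_ ?_ fun _ _ ↦ rfl
  all_goals simp [Dir.opp]

lemma sum_neighbour_eq (hx : x ∈ SSet d k) {v : Fin d → ℤ} {j : Fin k} (hj : v = x j)
    (g : Fin k → ℝ) : (∑ j', if v = x j' then g j' else 0) = g j := by
  rw [Finset.sum_eq_single_of_mem j (Finset.mem_univ j), if_pos hj]
  exact fun j' _ hne ↦ if_neg fun h ↦ hx j' j hne (h.symm.trans hj)

lemma sum_neighbour_eq_zero {v : Fin d → ℤ} (hfree : v ∉ Set.range x) (g : Fin k → ℝ) :
    (∑ j, if v = x j then g j else 0) = 0 :=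
  Finset.sum_eq_zero fun j _ ↦ if_neg fun h ↦ hfree ⟨j, h.symm⟩

lemma gen_exclusion (f : Conf d k → ℝ) (x : SSet d k) :
    (exclusion d k).gen (fun z ↦ f z) x
      = (∑ a, if x.1 + unitStep a ∈ SSet d k then f (x.1 + unitStep a) - f x else 0)
        + 1 / 2 * ∑ c ∈ contacts x.1, (f (cswap c.1.1 c.2 x) - f x) := by
  rw [sum_contacts fun i _ j ↦ f (cswap i j x) - f x, Finset.mul_sum, ← Finset.sum_add_distrib]
  refine Finset.sum_congr rfl fun a _ ↦ ?_
  rw [add_unitStep_mem_SSet_iff x.2]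
  change (if x.1 a.1 + a.2.vec ∈ Set.range x.1 then (1 / 2 : ℝ) else 1) *
    (f (hop a.1 a.2.vec x) - f x) = _
  by_cases hocc : x.1 a.1 + a.2.vec ∈ Set.range x.1
  · obtain ⟨j, hj⟩ := id hocc
    rw [if_pos hocc, if_neg (not_not.mpr hocc), zero_add, sum_neighbour_eq x.2 hj.symm,
      hop_eq_cswap x.2 hj.symm]
  · rw [if_neg hocc, if_pos hocc, sum_neighbour_eq_zero hocc, mul_zero, add_zero, one_mul,
      hop_eq_add_single x.2 hocc, unitStep]

lemma sum_sum_lt_of_symm {ι : Type*} [Fintype ι] [LinearOrder ι] {g : ι → ι → ℝ}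
    (hsymm : ∀ i j, g i j = g j i) (hdiag : ∀ i, g i i = 0) :
    ∑ i, ∑ j, (if i < j then g i j else 0) = 1 / 2 * ∑ i, ∑ j, g i j := by
  have hsplit (i j : ι) :
      g i j = (if i < j then g i j else 0) + if j < i then g j i else 0 := by
    rcases lt_trichotomy i j with h | rfl | h
    · rw [if_pos h, if_neg h.asymm, add_zero]
    · rw [if_neg (lt_irrefl i), hdiag, add_zero]
    · rw [if_neg h.asymm, if_pos h, zero_add, hsymm]
  have hdouble : ∑ i, ∑ j, g i j = (∑ i, ∑ j, if i < j then g i j else 0)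
      + ∑ i, ∑ j, if j < i then g j i else 0 := by
    simp only [← Finset.sum_add_distrib, ← hsplit]
  rw [hdouble, Finset.sum_comm (f := fun i j ↦ if j < i then g j i else 0)]
  ring

lemma sum_swaps_eq (hx : x ∈ SSet d k) (f : Conf d k → ℝ) :
    (∑ i, ∑ j, if i < j ∧ vnorm (x i - x j) = 1 ∧ x ∈ SSet d k then f (cswap i j x) - f x else 0)
      = 1 / 2 * ∑ c ∈ contacts x, (f (cswap c.1.1 c.2 x) - f x) := by
  set g : Fin k → Fin k → ℝ := fun i j ↦
    if vnorm (x i - x j) = 1 then f (cswap i j x) - f x else 0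
  have hsymm (i j) : g i j = g j i := by
    have hnorm : vnorm (x i - x j) = vnorm (x j - x i) := by
      simp only [vnorm, Pi.sub_apply, Int.cast_sub, sub_sq_comm]
    simp only [g, hnorm, cswap, Equiv.swap_comm]
  have hcontacts (i j) : g i j
      = ∑ p : Dir d, if x i + p.vec = x j then f (cswap i j x) - f x else 0 := by
    by_cases h : vnorm (x j - x i) = 1
    · obtain ⟨p, hp⟩ := (vnorm_eq_one_iff _).mp h
      have hiff (q : Dir d) : x i + q.vec = x j ↔ q = p := by
        rw [← Dir.vec_injective.eq_iff, hp, eq_sub_iff_add_eq']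
      rw [hsymm i j]
      simp only [g, if_pos h, hiff, Finset.sum_ite_eq', Finset.mem_univ, if_true]
      rw [cswap, cswap, Equiv.swap_comm]
    · rw [hsymm i j]
      refine (if_neg h).trans (Finset.sum_eq_zero fun p _ ↦ if_neg fun hp ↦ h ?_).symm
      exact (vnorm_eq_one_iff _).mpr ⟨p, eq_sub_of_add_eq' hp⟩
  rw [sum_contacts fun i _ j ↦ f (cswap i j x) - f x, Fintype.sum_prod_type]
  simp only [Finset.sum_comm (γ := Dir d), ← hcontacts, ite_and, hx, if_true]
  exact sum_sum_lt_of_symm hsymm fun i ↦ if_neg (by simp [vnorm])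

lemma Lexc_eq_gen (f : Conf d k → ℝ) (x : SSet d k) :
    Lexc f x = (exclusion d k).gen (fun z ↦ f z) x := by
  rw [gen_exclusion, Lexc, sum_swaps_eq x.2]
  simp only [ite_and]
  rw [tsum_cnorm_sub_eq_one fun y ↦ if y ∈ SSet d k then f y - f x else 0]

lemma Lexc_iterate (f : Conf d k → ℝ) (n : ℕ) (x : SSet d k) :
    Lexc^[n] f x = ((exclusion d k).gen ^ n) (fun z ↦ f z) x := by
  induction n generalizing x with
  | zero => rfl
  | succ n ih =>
    rw [Function.iterate_succ_apply', Lexc_eq_gen, pow_succ', Module.End.mul_apply]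
    simp only [ih]

/-- A contact replaces the two independent jumps of the particles by half a swap seen from each of
them; by symmetry this leaves a mixed second difference. -/
lemma gen_exclusion_sub_Lrw (f : Conf d k → ℝ) (x : SSet d k) :
    (exclusion d k).gen (fun z ↦ f z) x - Lrw f x
      = 1 / 2 * ∑ c ∈ contacts x.1, (f (x.1 + unitStep c.1 - unitStep (c.2, c.1.2)) + f x
          - f (x.1 + unitStep c.1) - f (x.1 - unitStep (c.2, c.1.2))) := by
  have hblocked : (∑ a, if x.1 + unitStep a ∈ SSet d k then f (x.1 + unitStep a) - f x else 0)
      = Lrw f x - ∑ c ∈ contacts x.1, (f (x.1 + unitStep c.1) - f x) := by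
    rw [sum_contacts fun i p _ ↦ f (x.1 + unitStep (i, p)) - f x, Lrw_eq_sum,
      ← Finset.sum_sub_distrib]
    refine Finset.sum_congr rfl fun a _ ↦ ?_
    rw [add_unitStep_mem_SSet_iff x.2]
    by_cases hocc : x.1 a.1 + a.2.vec ∈ Set.range x.1
    · obtain ⟨j, hj⟩ := id hocc
      rw [if_neg (not_not.mpr hocc), sum_neighbour_eq x.2 hj.symm, sub_self]
    · rw [if_pos hocc, sum_neighbour_eq_zero hocc, sub_zero]
  have hflip : ∑ c ∈ contacts x.1, (f (x.1 + unitStep c.1) - f x)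
      = ∑ c ∈ contacts x.1, (f (x.1 - unitStep (c.2, c.1.2)) - f x) := by
    rw [← sum_contacts_flip fun i p _ ↦ f (x.1 + unitStep (i, p)) - f x]
    simp only [unitStep_opp, ← sub_eq_add_neg]
  have hswap : ∑ c ∈ contacts x.1, (f (cswap c.1.1 c.2 x) - f x)
      = ∑ c ∈ contacts x.1, (f (x.1 + unitStep c.1 - unitStep (c.2, c.1.2)) - f x) :=
    Finset.sum_congr rfl fun c hc ↦ by
      rw [cswap_eq_add_single_sub_single (mem_contacts.mp hc), unitStep, unitStep]
  rw [gen_exclusion, hblocked, hswap]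
  simp only [Finset.sum_sub_distrib, Finset.sum_add_distrib] at hflip ⊢
  linarith

end Contacts

/-! ### Resolvents of commuting contractions -/

section Resolvent

open NormedSpace MeasureTheory Filter Set
open scoped Topology Nat

variable {𝔸 : Type*} [NormedRing 𝔸] [NormedAlgebra ℝ 𝔸]

lemma hasSum_of_hasSum_succ {Z s : 𝔸} {r : ℝ} (hr : r ≠ 0) {f : ℕ → ℝ}
    (h : HasSum (fun n : ℕ ↦ (f (n + 1) * (r ^ n / n !)) • Z ^ (n + 1)) s) :
    HasSum (fun n : ℕ ↦ (n / r * f n * (r ^ n / n !)) • Z ^ n) s := by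
  rw [← hasSum_nat_add_iff' 1]
  convert! h using 2 with n
  · rw [Nat.factorial_succ]
    push_cast
    congr 1
    field_simp
    ring
  · simp

variable [CompleteSpace 𝔸]

lemma hasSum_exp_smul (Z : 𝔸) (r : ℝ) :
    HasSum (fun n : ℕ ↦ (r ^ n / n !) • Z ^ n) (exp (r • Z)) := by
  convert! exp_series_hasSum_exp' (𝕂 := ℝ) (r • Z) using 2 with n
  rw [smul_pow, smul_smul, div_eq_inv_mul]

lemma hasSum_real_exp (r : ℝ) : HasSum (fun n : ℕ ↦ r ^ n / n !) (Real.exp r) := by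
  rw [Real.exp_eq_exp_ℝ]
  exact expSeries_div_hasSum_exp r

lemma exp_smul_sub_smul_one (Z : 𝔸) (c r : ℝ) :
    exp (r • (Z - c • (1 : 𝔸))) = Real.exp (-(r * c)) • exp (r • Z) := by
  let +nondep : NormedAlgebra ℚ 𝔸 := .restrictScalars ℚ ℝ 𝔸
  have hsplit : r • (Z - c • (1 : 𝔸)) = algebraMap ℝ 𝔸 (-(r * c)) + r • Z := by
    rw [Algebra.algebraMap_eq_smul_one, smul_sub, smul_smul, neg_smul]
    abel
  rw [hsplit, exp_add_of_commute (Algebra.commutes _ _), ← algebraMap_exp_comm,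
    ← Real.exp_eq_exp_ℝ, Algebra.smul_def (Real.exp (-(r * c)))]

lemma hasSum_sub_one_mul_exp_smul (Z : 𝔸) {r : ℝ} (hr : r ≠ 0) :
    HasSum (fun n : ℕ ↦ ((n / r - 1) * (r ^ n / n !)) • Z ^ n) ((Z - 1) * exp (r • Z)) := by
  have hexp := hasSum_exp_smul Z r
  have hmul : HasSum (fun n : ℕ ↦ (n / r * 1 * (r ^ n / n !)) • Z ^ n) (Z * exp (r • Z)) := by
    refine hasSum_of_hasSum_succ (f := fun _ ↦ 1) hr ?_
    simpa only [one_mul, mul_smul_comm, pow_succ'] using hexp.mul_left Z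
  rw [sub_mul, one_mul]
  convert! hmul.sub hexp using 2 with n
  rw [← sub_smul]
  ring_nf

lemma hasSum_poisson_variance {r : ℝ} (hr : r ≠ 0) :
    HasSum (fun n : ℕ ↦ (n / r - 1) ^ 2 * (r ^ n / n !)) (Real.exp r / r) := by
  have hexp := hasSum_real_exp r
  have hmean : HasSum (fun n : ℕ ↦ n / r * (r ^ n / n !)) (Real.exp r) := by
    simpa using hasSum_of_hasSum_succ (Z := (1 : ℝ)) (f := fun _ ↦ 1) hr (by simpa using hexp)
  have hsq : HasSum (fun n : ℕ ↦ n / r * (n / r) * (r ^ n / n !))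
      (Real.exp r + r⁻¹ * Real.exp r) := by
    simpa using hasSum_of_hasSum_succ (Z := (1 : ℝ)) (f := fun n ↦ n / r) hr (by
      convert! hmean.add (hexp.mul_left r⁻¹) using 2 with n
      simp only [Nat.cast_add, Nat.cast_one, one_pow, smul_eq_mul]
      ring)
  convert! (hsq.sub (hmean.mul_left 2)).add hexp using 1
  · funext n
    ring
  · ring

section LaplaceResolvent

lemma norm_mul_exp_smul_sub (W a : 𝔸) (α r : ℝ) :
    ‖a * exp (r • (W - α • (1 : 𝔸)))‖ = ‖a * exp (r • W)‖ * Real.exp (-(α * r)) := by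
  rw [exp_smul_sub_smul_one, mul_smul_comm, norm_smul, Real.norm_of_nonneg (Real.exp_pos _).le,
    mul_comm r, mul_comm]

/-- The resolvent `(α - W)⁻¹` as the Laplace transform of the semigroup `exp (r • W)`; meaningful
when that semigroup is contractive and `0 < α`. -/
def laplaceResolvent (W : 𝔸) (α : ℝ) : 𝔸 := ∫ r in Ioi (0 : ℝ), exp (r • (W - α • (1 : 𝔸)))

variable {W : 𝔸} {α : ℝ}

lemma integrableOn_rpow_mul_exp_neg_mul {s : ℝ} (hs : 0 < s) (hα : 0 < α) :
    IntegrableOn (fun r : ℝ ↦ r ^ (s - 1) * Real.exp (-(α * r))) (Ioi 0) := by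
  simpa using integrableOn_rpow_mul_exp_neg_mul_rpow (p := 1) (s := s - 1) (b := α)
    (by linarith) one_pos hα

lemma norm_exp_smul_sub_le (hW : ∀ r : ℝ, 0 ≤ r → ‖exp (r • W)‖ ≤ 1) {r : ℝ} (hr : 0 ≤ r) :
    ‖exp (r • (W - α • (1 : 𝔸)))‖ ≤ Real.exp (-(α * r)) := by
  have h := norm_mul_exp_smul_sub W 1 α r
  rw [one_mul, one_mul] at h
  rw [h]
  exact mul_le_of_le_one_left (Real.exp_pos _).le (hW r hr)

lemma integrableOn_exp_smul_sub (hW : ∀ r : ℝ, 0 ≤ r → ‖exp (r • W)‖ ≤ 1) (hα : 0 < α) :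
    IntegrableOn (fun r : ℝ ↦ exp (r • (W - α • (1 : 𝔸)))) (Ioi 0) := by
  have hexp := integrableOn_rpow_mul_exp_neg_mul one_pos hα
  simp only [sub_self, Real.rpow_zero, one_mul] at hexp
  refine hexp.mono' (differentiable_exp_smul_const ℝ _).continuous.aestronglyMeasurable ?_
  filter_upwards [ae_restrict_mem measurableSet_Ioi] with r hr
  exact norm_exp_smul_sub_le hW (le_of_lt hr)

lemma mul_laplaceResolvent (hW : ∀ r : ℝ, 0 ≤ r → ‖exp (r • W)‖ ≤ 1) (hα : 0 < α) (a : 𝔸) :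
    a * laplaceResolvent W α = ∫ r in Ioi (0 : ℝ), a * exp (r • (W - α • (1 : 𝔸))) :=
  (integral_const_mul_of_integrable (integrableOn_exp_smul_sub hW hα)).symm

lemma smul_one_sub_mul_laplaceResolvent (hW : ∀ r : ℝ, 0 ≤ r → ‖exp (r • W)‖ ≤ 1) (hα : 0 < α) :
    (α • (1 : 𝔸) - W) * laplaceResolvent W α = 1 := by
  have hlim : Tendsto (fun r : ℝ ↦ exp (r • (W - α • (1 : 𝔸)))) atTop (𝓝 0) := by
    refine squeeze_zero_norm' ?_
      (Real.tendsto_exp_neg_atTop_nhds_zero.comp (tendsto_id.const_mul_atTop hα))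
    filter_upwards [eventually_ge_atTop 0] with r hr using norm_exp_smul_sub_le hW hr
  have hint := integral_Ioi_of_hasDerivAt_of_tendsto'
    (fun r _ ↦ hasDerivAt_exp_smul_const' (W - α • (1 : 𝔸)) r)
    ((integrableOn_exp_smul_sub hW hα).const_mul _) hlim
  rw [← neg_sub, neg_mul, mul_laplaceResolvent hW hα, hint, zero_smul, exp_zero, zero_sub, neg_neg]

lemma norm_mul_laplaceResolvent_le (hW : ∀ r : ℝ, 0 ≤ r → ‖exp (r • W)‖ ≤ 1) (hα : 0 < α)
    {a : 𝔸} {s C : ℝ} (hs : 0 < s) (ha : ∀ r, 0 < r → ‖a * exp (r • W)‖ ≤ C * r ^ (s - 1)) :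
    ‖a * laplaceResolvent W α‖ ≤ C * ((1 / α) ^ s * Real.Gamma s) := by
  rw [mul_laplaceResolvent hW hα, ← Real.integral_rpow_mul_exp_neg_mul_Ioi hs hα,
    ← integral_const_mul]
  refine norm_integral_le_of_norm_le ((integrableOn_rpow_mul_exp_neg_mul hs hα).const_mul C) ?_
  filter_upwards [ae_restrict_mem measurableSet_Ioi] with r hr
  rw [norm_mul_exp_smul_sub, ← mul_assoc]
  gcongr
  exact ha r hr

end LaplaceResolvent

/-- The bounded generator `∑ j ∈ s, (S j - 1)` of the Markov semigroup which applies each of the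
contractions `S j`, `j ∈ s`, at the times of an independent Poisson clock of rate one. -/
def poissonGen {J : Type*} (S : J → 𝔸) (s : Finset J) : 𝔸 := ∑ j ∈ s, (S j - 1)

lemma exp_poissonGen_eq_mul_erase {J : Type*} {S : J → 𝔸}
    (hc : ∀ i j, Commute (S i) (S j)) {s : Finset J} {i : J} (hi : i ∈ s) (r : ℝ) :
    exp (r • poissonGen S s) = exp (r • (S i - 1)) * exp (r • poissonGen S (s.erase i)) := by
  let +nondep : NormedAlgebra ℚ 𝔸 := .restrictScalars ℚ ℝ 𝔸
  rw [poissonGen, ← Finset.add_sum_erase s _ hi, smul_add]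
  refine exp_add_of_commute (Commute.smul_left (Commute.smul_right ?_ r) r)
  exact Commute.sum_right _ _ _ fun j _ ↦
    ((hc i j).sub_left (Commute.one_left _)).sub_right (Commute.one_right _)

variable [NormOneClass 𝔸]

lemma norm_exp_smul_le {Z : 𝔸} {c r : ℝ} (hr : 0 ≤ r) (hZ : ‖Z‖ ≤ c) :
    ‖exp (r • Z)‖ ≤ Real.exp (r * c) := by
  refine (hasSum_exp_smul Z r).norm_le_of_bounded (hasSum_real_exp (r * c)) fun n ↦ ?_
  rw [norm_smul, Real.norm_of_nonneg (by positivity), mul_pow, mul_div_right_comm]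
  gcongr
  exact (norm_pow_le Z n).trans (by gcongr)

lemma norm_exp_smul_sub_le_one {Z : 𝔸} {c r : ℝ} (hr : 0 ≤ r) (hZ : ‖Z‖ ≤ c) :
    ‖exp (r • (Z - c • (1 : 𝔸)))‖ ≤ 1 := by
  rw [exp_smul_sub_smul_one, norm_smul, Real.norm_of_nonneg (Real.exp_pos _).le]
  calc Real.exp (-(r * c)) * ‖exp (r • Z)‖ ≤ Real.exp (-(r * c)) * Real.exp (r * c) := by
        gcongr
        exact norm_exp_smul_le hr hZ
    _ = 1 := by rw [← Real.exp_add, neg_add_cancel, Real.exp_zero]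

/-- Optimised AM-GM; with `z = n / r - 1` and `n` Poisson of mean `r`, both terms on the right
average to `1 / (2 * √r)`. -/
lemma abs_le_inv_two_sqrt_add {r : ℝ} (hr : 0 < r) (z : ℝ) :
    |z| ≤ 1 / (2 * √r) + √r / 2 * z ^ 2 := by
  have : 0 < √r := Real.sqrt_pos.2 hr
  have hsq : 1 / (2 * √r) * (√r * |z| - 1) ^ 2 = 1 / (2 * √r) + √r / 2 * |z| ^ 2 - |z| := by
    field_simp
    ring
  have hnonneg : 0 ≤ 1 / (2 * √r) * (√r * |z| - 1) ^ 2 := by positivity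
  rw [← sq_abs z]
  linarith

lemma norm_sub_one_mul_exp_le {Z : 𝔸} (hZ : ‖Z‖ ≤ 1) {r : ℝ} (hr : 0 < r) :
    ‖(Z - 1) * exp (r • (Z - 1))‖ ≤ 1 / √r := by
  have : 0 < √r := Real.sqrt_pos.2 hr
  have hseries : ‖(Z - 1) * exp (r • Z)‖ ≤
      1 / (2 * √r) * Real.exp r + √r / 2 * (Real.exp r / r) := by
    refine (hasSum_sub_one_mul_exp_smul Z hr.ne').norm_le_of_bounded
      (((hasSum_real_exp r).mul_left _).add ((hasSum_poisson_variance hr.ne').mul_left _))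
      fun n ↦ ?_
    calc ‖((n / r - 1) * (r ^ n / n !)) • Z ^ n‖ = |n / r - 1| * (r ^ n / n !) * ‖Z ^ n‖ := by
          rw [norm_smul, norm_mul, Real.norm_eq_abs,
            Real.norm_of_nonneg (by positivity : 0 ≤ r ^ n / (n ! : ℝ))]
      _ ≤ (1 / (2 * √r) + √r / 2 * (n / r - 1) ^ 2) * (r ^ n / n !) * 1 := by
          gcongr
          · exact abs_le_inv_two_sqrt_add hr _
          · exact (norm_pow_le Z n).trans (pow_le_one₀ (norm_nonneg _) hZ)
      _ = _ := by ring
  have hshift := exp_smul_sub_smul_one Z 1 r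
  rw [one_smul, mul_one] at hshift
  rw [hshift, mul_smul_comm, norm_smul, Real.norm_of_nonneg (Real.exp_pos _).le]
  calc Real.exp (-r) * ‖(Z - 1) * exp (r • Z)‖
      ≤ Real.exp (-r) * (1 / (2 * √r) * Real.exp r + √r / 2 * (Real.exp r / r)) := by gcongr
    _ = Real.exp (-r) * Real.exp r * (1 / (2 * √r) + √r / r / 2) := by ring
    _ = 1 / √r := by
        rw [← Real.exp_add, neg_add_cancel, Real.exp_zero, Real.sqrt_div_self']
        field_simp
        norm_num

section PoissonGen

variable {J : Type*} {S : J → 𝔸}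

lemma norm_exp_poissonGen_le_one (hS : ∀ j, ‖S j‖ ≤ 1) (s : Finset J) {r : ℝ} (hr : 0 ≤ r) :
    ‖exp (r • poissonGen S s)‖ ≤ 1 := by
  have hgen : poissonGen S s = ∑ j ∈ s, S j - (s.card : ℝ) • (1 : 𝔸) := by
    rw [poissonGen, Finset.sum_sub_distrib, Finset.sum_const, Nat.cast_smul_eq_nsmul]
  rw [hgen]
  exact norm_exp_smul_sub_le_one hr <| (norm_sum_le _ _).trans <|
    (Finset.sum_le_card_nsmul _ _ 1 fun j _ ↦ hS j).trans_eq (by simp)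

lemma norm_sub_one_mul_exp_poissonGen_le (hS : ∀ j, ‖S j‖ ≤ 1)
    (hc : ∀ i j, Commute (S i) (S j)) {s : Finset J} {i : J} (hi : i ∈ s) {r : ℝ} (hr : 0 < r) :
    ‖(S i - 1) * exp (r • poissonGen S s)‖ ≤ 1 / √r := by
  rw [exp_poissonGen_eq_mul_erase hc hi, ← mul_assoc]
  calc _ ≤ ‖(S i - 1) * exp (r • (S i - 1))‖ * ‖exp (r • poissonGen S (s.erase i))‖ :=
        norm_mul_le _ _
    _ ≤ 1 / √r * 1 := by
        gcongr
        exacts [norm_sub_one_mul_exp_le (hS i) hr, norm_exp_poissonGen_le_one hS _ hr.le]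
    _ = 1 / √r := mul_one _

lemma norm_sub_one_mul_sub_one_mul_exp_poissonGen_le (hS : ∀ j, ‖S j‖ ≤ 1)
    (hc : ∀ i j, Commute (S i) (S j)) {s : Finset J} {i j : J} (hi : i ∈ s) (hj : j ∈ s)
    (hij : i ≠ j) {r : ℝ} (hr : 0 < r) :
    ‖(S i - 1) * (S j - 1) * exp (r • poissonGen S s)‖ ≤ 1 / r := by
  have hcomm : Commute (S j - 1) (exp (r • (S i - 1))) :=
    ((((hc j i).sub_left (Commute.one_left _)).sub_right (Commute.one_right _)).smul_right
      r).exp_right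
  have hfactor : (S i - 1) * (S j - 1) * exp (r • poissonGen S s) =
      ((S i - 1) * exp (r • (S i - 1))) *
        ((S j - 1) * exp (r • poissonGen S (s.erase i))) := by
    rw [exp_poissonGen_eq_mul_erase hc hi, mul_assoc, ← mul_assoc (S j - 1), hcomm.eq]
    simp only [mul_assoc]
  calc _ ≤ ‖(S i - 1) * exp (r • (S i - 1))‖ *
        ‖(S j - 1) * exp (r • poissonGen S (s.erase i))‖ := hfactor ▸ norm_mul_le _ _
    _ ≤ 1 / √r * (1 / √r) := by
        gcongr
        exacts [norm_sub_one_mul_exp_le (hS i) hr, norm_sub_one_mul_exp_poissonGen_le hS hc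
          (Finset.mem_erase.2 ⟨hij.symm, hj⟩) hr]
    _ = 1 / r := by rw [div_mul_div_comm, one_mul, Real.mul_self_sqrt hr.le]

lemma norm_sub_one_mul_sub_one_mul_exp_poissonGen_le_rpow (hS : ∀ j, ‖S j‖ ≤ 1)
    (hc : ∀ i j, Commute (S i) (S j)) {s : Finset J} {i j : J} (hi : i ∈ s) (hj : j ∈ s)
    (hij : i ≠ j) {δ r : ℝ} (hδ : 0 ≤ δ) (hδ1 : δ ≤ 1) (hr : 0 < r) :
    ‖(S i - 1) * (S j - 1) * exp (r • poissonGen S s)‖ ≤ 4 ^ δ * r ^ (δ - 1) := by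
  have hnorm_sub (l : J) : ‖S l - 1‖ ≤ 2 := by
    linarith [norm_sub_le (S l) 1, hS l, norm_one (α := 𝔸)]
  set z := ‖(S i - 1) * (S j - 1) * exp (r • poissonGen S s)‖
  have hz0 : 0 ≤ z := norm_nonneg _
  have hδ' : 0 ≤ 1 - δ := sub_nonneg.2 hδ1
  have hz4 : z ≤ 4 := calc
    z ≤ ‖S i - 1‖ * ‖S j - 1‖ * ‖exp (r • poissonGen S s)‖ :=
        (norm_mul_le _ _).trans (by gcongr; exact norm_mul_le _ _)
    _ ≤ 2 * 2 * 1 := by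
        gcongr
        exacts [hnorm_sub i, hnorm_sub j, norm_exp_poissonGen_le_one hS s hr.le]
    _ = 4 := by norm_num
  have hzr : z ≤ 1 / r :=
    norm_sub_one_mul_sub_one_mul_exp_poissonGen_le hS hc hi hj hij hr
  calc z = z ^ δ * z ^ (1 - δ) := by
        rw [← Real.rpow_add_of_nonneg hz0 hδ hδ', add_sub_cancel, Real.rpow_one]
    _ ≤ 4 ^ δ * (1 / r) ^ (1 - δ) := by gcongr
    _ = 4 ^ δ * r ^ (δ - 1) := by
        rw [one_div, Real.inv_rpow hr.le, ← Real.rpow_neg hr.le, neg_sub]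

end PoissonGen

section PoissonResolvent

variable {J : Type*} {S : J → 𝔸}

lemma norm_sub_one_mul_laplaceResolvent_le (hS : ∀ j, ‖S j‖ ≤ 1)
    (hc : ∀ i j, Commute (S i) (S j)) {s : Finset J} {i : J} (hi : i ∈ s) {α : ℝ} (hα : 0 < α) :
    ‖(S i - 1) * laplaceResolvent (poissonGen S s) α‖ ≤
      (1 / α) ^ (1 / 2 : ℝ) * Real.Gamma (1 / 2) := by
  rw [← one_mul (_ * Real.Gamma _)]
  refine norm_mul_laplaceResolvent_le (fun r hr ↦ norm_exp_poissonGen_le_one hS s hr) hα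
    one_half_pos fun r hr ↦ (norm_sub_one_mul_exp_poissonGen_le hS hc hi hr).trans_eq ?_
  rw [one_mul, Real.sqrt_eq_rpow, one_div, ← Real.rpow_neg hr.le]
  norm_num

lemma norm_sub_one_mul_sub_one_mul_laplaceResolvent_le (hS : ∀ j, ‖S j‖ ≤ 1)
    (hc : ∀ i j, Commute (S i) (S j)) {s : Finset J} {i j : J} (hi : i ∈ s) (hj : j ∈ s)
    (hij : i ≠ j) {α δ : ℝ} (hα : 0 < α) (hδ : 0 < δ) (hδ1 : δ ≤ 1) :
    ‖(S i - 1) * (S j - 1) * laplaceResolvent (poissonGen S s) α‖ ≤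
      4 ^ δ * ((1 / α) ^ δ * Real.Gamma δ) :=
  norm_mul_laplaceResolvent_le (fun _ hr ↦ norm_exp_poissonGen_le_one hS s hr) hα hδ
    fun _ hr ↦ norm_sub_one_mul_sub_one_mul_exp_poissonGen_le_rpow hS hc hi hj hij hδ.le hδ1 hr

end PoissonResolvent

end Resolvent

/-! ### The Green operator of a free walk -/

section WalkGreen

open scoped BoundedContinuousFunction

variable {G J : Type*} [AddCommGroup G] [TopologicalSpace G] [DiscreteTopology G]

/-- Translation of bounded functions on a discrete abelian group, `f ↦ f (· + v)`. -/
def translation (v : G) : (G →ᵇ ℝ) →L[ℝ] (G →ᵇ ℝ) :=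
  LinearMap.mkContinuous
    { toFun f := f.compContinuous ⟨fun x ↦ x + v, continuous_of_discreteTopology⟩
      map_add' _ _ := rfl
      map_smul' _ _ := rfl } 1 fun f ↦ by
    rw [one_mul]
    exact (BoundedContinuousFunction.norm_le (norm_nonneg _)).2 fun x ↦ f.norm_coe_le_norm _

lemma norm_translation_le (v : G) : ‖translation v‖ ≤ 1 :=
  LinearMap.mkContinuous_norm_le _ zero_le_one _

lemma commute_translation (v w : G) : Commute (translation v) (translation w) :=
  ContinuousLinearMap.ext fun f ↦ BoundedContinuousFunction.ext fun x ↦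
    congrArg f (add_right_comm x v w)

instance : Nontrivial (G →ᵇ ℝ) :=
  ⟨0, BoundedContinuousFunction.const G 1, fun h ↦ zero_ne_one (DFunLike.congr_fun h 0)⟩

variable [Fintype J] (e : J → G) (α : ℝ)

/-- The Green operator `(α - L)⁻¹` of the walk on `G` which makes each of the jumps `e j` at rate
one, i.e. `L f x = ∑ j, (f (x + e j) - f x)`. -/
def walkGreen : (G →ᵇ ℝ) →L[ℝ] (G →ᵇ ℝ) :=
  laplaceResolvent (poissonGen (fun j ↦ translation (e j)) Finset.univ) α

variable {α}

lemma walkGreen_resolvent_eq (hα : 0 < α) (f : G →ᵇ ℝ) (x : G) :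
    α * walkGreen e α f x - ∑ j, (walkGreen e α f (x + e j) - walkGreen e α f x) = f x := by
  have hinv := smul_one_sub_mul_laplaceResolvent (fun _ hr ↦
    norm_exp_poissonGen_le_one (S := fun j ↦ translation (e j)) (fun _ ↦ norm_translation_le _)
      Finset.univ hr) hα
  have happly := congrArg (fun T : (G →ᵇ ℝ) →L[ℝ] (G →ᵇ ℝ) ↦ T f x) hinv
  rw [poissonGen, mul_apply_eq_comp, sub_apply, sum_apply,
    BoundedContinuousFunction.sub_apply, BoundedContinuousFunction.sum_apply] at happly
  exact happly

lemma abs_apply_walkGreen_le {T : (G →ᵇ ℝ) →L[ℝ] (G →ᵇ ℝ)} {c : ℝ}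
    (hT : ‖T * walkGreen e α‖ ≤ c) (f : G →ᵇ ℝ) (x : G) : |T (walkGreen e α f) x| ≤ c * ‖f‖ :=
  ((T (walkGreen e α f)).norm_coe_le_norm x).trans ((T * walkGreen e α).le_of_opNorm_le hT f)

lemma abs_walkGreen_add_sub_le (hα : 0 < α) (f : G →ᵇ ℝ) (j : J) (x : G) :
    |walkGreen e α f (x + e j) - walkGreen e α f x| ≤
      (1 / α) ^ (1 / 2 : ℝ) * Real.Gamma (1 / 2) * ‖f‖ :=
  abs_apply_walkGreen_le (T := translation (e j) - 1) e
    (norm_sub_one_mul_laplaceResolvent_le (S := fun j ↦ translation (e j))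
      (fun _ ↦ norm_translation_le _) (fun _ _ ↦ commute_translation _ _) (Finset.mem_univ j) hα)
    f x

lemma abs_walkGreen_second_difference_le (hα : 0 < α) {δ : ℝ} (hδ : 0 < δ) (hδ1 : δ ≤ 1)
    (f : G →ᵇ ℝ) {i j : J} (hij : i ≠ j) (x : G) :
    |walkGreen e α f (x + e i + e j) - walkGreen e α f (x + e i)
        - (walkGreen e α f (x + e j) - walkGreen e α f x)| ≤
      4 ^ δ * ((1 / α) ^ δ * Real.Gamma δ) * ‖f‖ :=
  abs_apply_walkGreen_le (T := (translation (e i) - 1) * (translation (e j) - 1)) e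
    (norm_sub_one_mul_sub_one_mul_laplaceResolvent_le (S := fun j ↦ translation (e j))
      (fun _ ↦ norm_translation_le _) (fun _ _ ↦ commute_translation _ _) (Finset.mem_univ i)
      (Finset.mem_univ j) hij hα hδ hδ1)
    f x

end WalkGreen

/-! ### A barrier which detects contacts -/

section Barrier

open Finset

/-- The even profile `n ↦ R * (1 - (1 - 1 / R) ^ |n|)`: it has slope one at the origin, is bounded
by `R`, and its second differences are at least `-1 / R`. -/
def barrierProfile (R : ℝ) (n : ℤ) : ℝ := R * (1 - (1 - 1 / R) ^ n.natAbs)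

variable {d k : ℕ} {R : ℝ}

lemma barrierProfile_zero : barrierProfile R 0 = 0 := by simp [barrierProfile]

lemma barrierProfile_neg (n : ℤ) : barrierProfile R (-n) = barrierProfile R n := by
  simp [barrierProfile]

lemma barrierProfile_one (hR : R ≠ 0) : barrierProfile R 1 = 1 := by simp [barrierProfile, hR]

lemma one_sub_inv_mem_Icc (hR : 1 ≤ R) : 1 - 1 / R ∈ Set.Icc (0 : ℝ) 1 := by
  have : 1 / R ≤ 1 := (div_le_one (by linarith)).2 hR
  have : 0 ≤ 1 / R := by positivity
  constructor <;> linarith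

lemma barrierProfile_nonneg (hR : 1 ≤ R) (n : ℤ) : 0 ≤ barrierProfile R n := by
  obtain ⟨hq0, hq1⟩ := one_sub_inv_mem_Icc hR
  exact mul_nonneg (by linarith) (sub_nonneg.2 (pow_le_one₀ hq0 hq1))

lemma barrierProfile_le (hR : 1 ≤ R) (n : ℤ) : barrierProfile R n ≤ R := by
  have hq := pow_nonneg (one_sub_inv_mem_Icc hR).1 n.natAbs
  exact mul_le_of_le_one_right (by linarith) (by linarith)

lemma neg_inv_le_barrierProfile_second_difference (hR : 1 ≤ R) (n : ℤ) :
    -(1 / R) ≤ barrierProfile R (n + 1) + barrierProfile R (n - 1) - 2 * barrierProfile R n := by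
  wlog hn : 0 ≤ n generalizing n
  · have h := this (-n) (by omega)
    rw [show -n + 1 = -(n - 1) by ring, show -n - 1 = -(n + 1) by ring] at h
    simp only [barrierProfile_neg] at h
    linarith
  have hRinv : 0 ≤ 1 / R := by positivity
  obtain ⟨_ | m, rfl⟩ := Int.eq_ofNat_of_zero_le hn
  · have hone := barrierProfile_one (R := R) (by positivity)
    rw [Int.ofNat_zero, zero_add, zero_sub, barrierProfile_neg, hone, barrierProfile_zero]
    linarith
  · have hsucc : ((m + 1 : ℕ) + 1 : ℤ).natAbs = m + 2 := by omega
    have hpred : ((m + 1 : ℕ) - 1 : ℤ).natAbs = m := by omega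
    obtain ⟨hq0, hq1⟩ := one_sub_inv_mem_Icc hR
    have hpow : (1 - 1 / R) ^ m ≤ 1 := pow_le_one₀ hq0 hq1
    calc -(1 / R) ≤ -(1 / R * (1 - 1 / R) ^ m) := neg_le_neg (mul_le_of_le_one_right hRinv hpow)
      _ = _ := by
        rw [barrierProfile, barrierProfile, barrierProfile, hsucc, hpred, Int.natAbs_natCast]
        have hmul : R * (1 / R) = 1 := mul_one_div_cancel (by positivity)
        linear_combination (1 - 1 / R) ^ m * (1 / R) * hmul

/-- The barrier profile of a displacement in `ℤ^d`, summed over the axes. -/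
def pairBarrier (R : ℝ) (z : Fin d → ℤ) : ℝ := ∑ b, barrierProfile R (z b)

lemma pairBarrier_zero : pairBarrier R (0 : Fin d → ℤ) = 0 := by
  simp [pairBarrier, barrierProfile_zero]

lemma pairBarrier_neg (z : Fin d → ℤ) : pairBarrier R (-z) = pairBarrier R z := by
  simp [pairBarrier, barrierProfile_neg]

lemma pairBarrier_vec (hR : R ≠ 0) (p : Dir d) : pairBarrier R p.vec = 1 := by
  rw [pairBarrier, sum_eq_single p.1]
  · rcases Int.units_eq_one_or p.2 with h | h <;>
      simp [Dir.vec, h, barrierProfile_neg, barrierProfile_one hR]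
  · intro b _ hb
    simp [Dir.vec, hb, barrierProfile_zero]
  · simp

lemma pairBarrier_nonneg (hR : 1 ≤ R) (z : Fin d → ℤ) : 0 ≤ pairBarrier R z :=
  sum_nonneg fun _ _ ↦ barrierProfile_nonneg hR _

lemma pairBarrier_le (hR : 1 ≤ R) (z : Fin d → ℤ) : pairBarrier R z ≤ d * R := by
  simpa [pairBarrier] using sum_le_card_nsmul univ (fun b ↦ barrierProfile R (z b)) R
    fun b _ ↦ barrierProfile_le hR _

lemma neg_inv_le_pairBarrier_second_difference (hR : 1 ≤ R) (z : Fin d → ℤ) (p : Dir d) :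
    -(1 / R) ≤ pairBarrier R (z + p.vec) + pairBarrier R (z - p.vec) - 2 * pairBarrier R z := by
  simp only [pairBarrier, mul_sum, ← sum_add_distrib, ← sum_sub_distrib]
  rw [sum_eq_single p.1]
  · have h := neg_inv_le_barrierProfile_second_difference hR (z p.1)
    rcases Int.units_eq_one_or p.2 with hp | hp
    · simpa [Dir.vec, hp] using h
    · simpa [Dir.vec, hp, ← sub_eq_add_neg, add_comm (barrierProfile R (z p.1 + 1))] using h
  · intro b _ hb
    simp only [Pi.add_apply, Pi.sub_apply, Dir.vec, Pi.single_eq_of_ne hb, add_zero, sub_zero]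
    ring
  · simp

/-- The sum of the pair barriers over all ordered pairs of particles. -/
def barrier (R : ℝ) (x : Conf d k) : ℝ := ∑ i, ∑ j, pairBarrier R (x i - x j)

lemma barrier_nonneg (hR : 1 ≤ R) (x : Conf d k) : 0 ≤ barrier R x :=
  sum_nonneg fun _ _ ↦ sum_nonneg fun _ _ ↦ pairBarrier_nonneg hR _

lemma barrier_le (hR : 1 ≤ R) (x : Conf d k) : barrier R x ≤ (k : ℝ) ^ 2 * d * R :=
  calc barrier R x ≤ ∑ _i : Fin k, ∑ _j : Fin k, (d : ℝ) * R := by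
        unfold barrier
        gcongr
        exact pairBarrier_le hR _
    _ = (k : ℝ) ^ 2 * d * R := by
        simp only [sum_const, card_univ, Fintype.card_fin, nsmul_eq_mul]
        ring

lemma neg_le_barrier_second_difference (hR : 1 ≤ R) (x : Conf d k) (a : Fin k × Dir d) :
    -((k : ℝ) ^ 2 * (1 / R)) ≤
      barrier R (x + unitStep a) + barrier R (x - unitStep a) - 2 * barrier R x := by
  obtain ⟨l, p⟩ := a
  have hpair (i j : Fin k) : -(1 / R) ≤ pairBarrier R ((x + unitStep (l, p)) i
      - (x + unitStep (l, p)) j) + pairBarrier R ((x - unitStep (l, p)) i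
      - (x - unitStep (l, p)) j) - 2 * pairBarrier R (x i - x j) := by
    have hz := neg_inv_le_pairBarrier_second_difference hR (x i - x j) p
    by_cases hi : i = l <;> by_cases hj : j = l
    · simp [hi, hj, pairBarrier_zero, zero_le_one.trans hR]
    · simp only [unitStep, hi, Pi.add_apply, Pi.sub_apply, Pi.single_eq_same,
        Pi.single_eq_of_ne hj, add_zero, sub_zero, ← add_sub_right_comm, sub_right_comm] at hz ⊢
      exact hz
    · rw [hj] at hz
      simp only [unitStep, hj, Pi.add_apply, Pi.sub_apply, Pi.single_eq_same,
        Pi.single_eq_of_ne hi, add_zero, sub_zero, sub_add_eq_sub_sub, ← sub_add]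
      linarith
    · simp only [unitStep, Pi.add_apply, Pi.sub_apply, Pi.single_eq_of_ne hi,
        Pi.single_eq_of_ne hj, add_zero, sub_zero]
      linarith [one_div_nonneg.2 (zero_le_one.trans hR)]
  calc -((k : ℝ) ^ 2 * (1 / R)) = ∑ _i : Fin k, ∑ _j : Fin k, -(1 / R) := by
        simp only [sum_const, card_univ, Fintype.card_fin, nsmul_eq_mul]
        ring
    _ ≤ _ := sum_le_sum fun i _ ↦ sum_le_sum fun j _ ↦ hpair i j
    _ = _ := by simp only [barrier, sum_add_distrib, sum_sub_distrib, mul_sum]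

lemma neg_le_Lrw_barrier (hR : 1 ≤ R) (x : Conf d k) :
    -((k : ℝ) ^ 3 * d * (1 / R)) ≤ Lrw (barrier R) x := by
  have hflip : Lrw (barrier R) x = ∑ a : Fin k × Dir d, (barrier R (x - unitStep a)
      - barrier R x) := by
    rw [Lrw_eq_sum, ← ((Equiv.refl (Fin k)).prodCongr Dir.opp).sum_comp]
    refine sum_congr rfl fun a _ ↦ ?_
    rw [Equiv.prodCongr_apply, Prod.map_apply', unitStep_opp, ← sub_eq_add_neg]
    rfl
  have hsum : ∑ _a : Fin k × Dir d, -((k : ℝ) ^ 2 * (1 / R)) ≤ 2 * Lrw (barrier R) x :=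
    calc _ ≤ ∑ a, (barrier R (x + unitStep a) + barrier R (x - unitStep a) - 2 * barrier R x) :=
          sum_le_sum fun a _ ↦ neg_le_barrier_second_difference hR x a
      _ = Lrw (barrier R) x + Lrw (barrier R) x := by
          nth_rw 1 [Lrw_eq_sum]
          rw [hflip, ← sum_add_distrib]
          exact sum_congr rfl fun a _ ↦ by ring
      _ = 2 * Lrw (barrier R) x := by ring
  simp only [sum_const, card_univ, Fintype.card_prod, Fintype.card_fin, Fintype.card_units_int,
    nsmul_eq_mul] at hsum
  push_cast at hsum
  linarith

lemma two_le_barrier_contact (hR : 1 ≤ R) {x : Conf d k} {c : (Fin k × Dir d) × Fin k}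
    (hc : c ∈ contacts x) :
    2 ≤ barrier R (x + unitStep c.1 - unitStep (c.2, c.1.2)) + barrier R x
      - barrier R (x + unitStep c.1) - barrier R (x - unitStep (c.2, c.1.2)) := by
  have hne := ne_of_mem_contacts hc
  rw [mem_contacts] at hc
  obtain ⟨⟨i, p⟩, j⟩ := c
  simp only at hne hc ⊢
  have hvec := pairBarrier_vec (R := R) (by positivity) p
  let excess (m n : Fin k) : ℝ :=
    pairBarrier R ((x + unitStep (i, p) - unitStep (j, p)) m
      - (x + unitStep (i, p) - unitStep (j, p)) n) + pairBarrier R (x m - x n)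
      - pairBarrier R ((x + unitStep (i, p)) m - (x + unitStep (i, p)) n)
      - pairBarrier R ((x - unitStep (j, p)) m - (x - unitStep (j, p)) n)
  have hij : excess i j = 2 := by
    norm_num [excess, unitStep, hne, hne.symm, ← hc, pairBarrier_zero, pairBarrier_neg, hvec]
  have hnonneg (m n : Fin k) : 0 ≤ excess m n := by
    have hsymm : excess m n = excess n m := by
      simp only [excess]
      rw [← pairBarrier_neg (_ - _), neg_sub, ← pairBarrier_neg (x m - x n), neg_sub,
        ← pairBarrier_neg ((x + unitStep (i, p)) m - _), neg_sub,
        ← pairBarrier_neg ((x - unitStep (j, p)) m - _), neg_sub]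
    by_cases hi : m = i ∨ n = i
    · by_cases hj : m = j ∨ n = j
      · rcases hi with rfl | rfl <;> rcases hj with rfl | rfl
        all_goals first | contradiction | linarith
      · obtain ⟨hmj, hnj⟩ := not_or.1 hj
        simp [excess, unitStep, Pi.single_eq_of_ne hmj, Pi.single_eq_of_ne hnj]
    · obtain ⟨hmi, hni⟩ := not_or.1 hi
      simp [excess, unitStep, Pi.single_eq_of_ne hmi, Pi.single_eq_of_ne hni]
  calc (2 : ℝ) = excess i j := hij.symm
    _ ≤ ∑ n, excess i n := single_le_sum (fun n _ ↦ hnonneg i n) (mem_univ j)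
    _ ≤ ∑ m, ∑ n, excess m n :=
        single_le_sum (f := fun m ↦ ∑ n, excess m n) (fun m _ ↦ sum_nonneg fun n _ ↦ hnonneg m n)
          (mem_univ i)
    _ = _ := by simp only [excess, barrier, sum_add_distrib, sum_sub_distrib]

end Barrier

/-! ### Gradient estimate for the resolvent equation -/

namespace JumpSystem

variable {X A : Type*} [Fintype A] (S : JumpSystem X A) {α : ℝ}

lemma nonneg_of_gen_le_smul (hα : 0 < α) {v : X → ℝ} (hv : BddBelow (Set.range v))
    (hgen : ∀ x, S.gen v x ≤ α * v x) (x : X) : 0 ≤ v x := by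
  by_contra! hneg
  have : Nonempty X := ⟨x⟩
  set m := ⨅ y, v y
  have hm (y : X) : m ≤ v y := ciInf_le hv y
  have hm0 : m < 0 := (hm x).trans_lt hneg
  set c : ℝ := (Fintype.card A : ℝ)
  have : 0 ≤ c := Nat.cast_nonneg _
  set ε := -(α * m) / (2 * (α + c))
  have hε_mul : ε * (2 * (α + c)) = -(α * m) := div_mul_cancel₀ _ (by positivity)
  have hε : 0 < ε := div_pos (neg_pos.2 (mul_neg_of_pos_of_neg hα hm0)) (by positivity)
  obtain ⟨y, hy⟩ := exists_lt_of_ciInf_lt (lt_add_of_pos_right m hε)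
  have hgen_ge : -(c * ε) ≤ S.gen v y :=
    calc -(c * ε) = ∑ _a : A, -ε := by simp [c]
      _ ≤ ∑ a, S.rate a y * (v (S.move a y) - v y) := by
          refine Finset.sum_le_sum fun a _ ↦ ?_
          nlinarith [S.rate_nonneg a y, S.rate_le_one a y, hm (S.move a y)]
      _ = S.gen v y := (S.gen_apply v y).symm
  nlinarith [hgen y, mul_lt_mul_of_pos_left hy hα]

lemma abs_le_of_abs_resolvent_le (hα : 0 < α) {v h : X → ℝ} {B : ℝ} (hv : ∀ x, |v x| ≤ B)
    (hh : ∀ x, 0 ≤ h x) (hle : ∀ x, |α * v x - S.gen v x| ≤ α * h x - S.gen h x) (x : X) :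
    |v x| ≤ h x := by
  have hsub := S.nonneg_of_gen_le_smul hα (v := h - v)
    ⟨-B, by rintro _ ⟨y, rfl⟩; simpa using by linarith [hh y, (abs_le.1 (hv y)).2]⟩
    (fun y ↦ by
      rw [map_sub, Pi.sub_apply, Pi.sub_apply]
      linarith [(abs_le.1 (hle y)).2]) x
  have hadd := S.nonneg_of_gen_le_smul hα (v := h + v)
    ⟨-B, by rintro _ ⟨y, rfl⟩; simpa using by linarith [hh y, (abs_le.1 (hv y)).1]⟩
    (fun y ↦ by
      rw [map_add, Pi.add_apply, Pi.add_apply]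
      linarith [(abs_le.1 (hle y)).1]) x
  rw [Pi.sub_apply] at hsub
  rw [Pi.add_apply] at hadd
  exact abs_le.2 ⟨by linarith, by linarith⟩

end JumpSystem

section Elliptic

open Finset
open scoped BoundedContinuousFunction

variable {d k : ℕ}

lemma card_contacts_sub_le_gen_barrier {R : ℝ} (hR : 1 ≤ R) (x : SSet d k) :
    #(contacts x.1) - (k : ℝ) ^ 3 * d * (1 / R) ≤
      (exclusion d k).gen (fun z ↦ barrier R z.1) x := by
  have hcontacts := card_nsmul_le_sum (contacts x.1) _ (2 : ℝ) fun c hc ↦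
    two_le_barrier_contact hR hc
  rw [nsmul_eq_mul] at hcontacts
  linarith [gen_exclusion_sub_Lrw (barrier R) x, neg_le_Lrw_barrier hR x.1]

lemma abs_gen_exclusion_sub_Lrw_le {Ψ : Conf d k → ℝ} {D : ℝ}
    (hΨ : ∀ (a b : Fin k × Dir d) (x : Conf d k), a ≠ b →
      |Ψ (x + unitStep a + unitStep b) - Ψ (x + unitStep a) - (Ψ (x + unitStep b) - Ψ x)| ≤ D)
    (x : SSet d k) :
    |(exclusion d k).gen (fun z ↦ Ψ z) x - Lrw Ψ x| ≤ D / 2 * #(contacts x.1) := by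
  rw [gen_exclusion_sub_Lrw, abs_mul, abs_of_pos one_half_pos]
  have hsum : |∑ c ∈ contacts x.1, (Ψ (x.1 + unitStep c.1 - unitStep (c.2, c.1.2)) + Ψ x.1
      - Ψ (x.1 + unitStep c.1) - Ψ (x.1 - unitStep (c.2, c.1.2)))| ≤ #(contacts x.1) * D := by
    rw [← nsmul_eq_mul]
    refine (abs_sum_le_sum_abs _ _).trans (sum_le_card_nsmul _ _ _ fun c hc ↦ ?_)
    have hne : c.1 ≠ (c.2, c.1.2) := fun h ↦ ne_of_mem_contacts hc (congrArg Prod.fst h)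
    have h := hΨ c.1 (c.2, c.1.2) (x.1 - unitStep (c.2, c.1.2)) hne
    rw [sub_add_cancel, sub_add_eq_add_sub, sub_add_cancel] at h
    rw [abs_le] at h ⊢
    constructor <;> linarith
  linarith

/-- `κ * R - barrier R` at `R = α ^ (-1 / 2)` balances the two error terms `α * barrier R` and
`1 / R`. -/
lemma exists_contact_supersolution (d k : ℕ) :
    ∃ κ : ℝ, 0 ≤ κ ∧ ∀ α : ℝ, 0 < α → α ≤ 1 → ∃ h : SSet d k → ℝ,
      (∀ x, h x ∈ Set.Icc 0 (κ * (1 / α) ^ (1 / 2 : ℝ))) ∧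
      ∀ x, #(contacts x.1) ≤ α * h x - (exclusion d k).gen h x := by
  refine ⟨(k : ℝ) ^ 2 * d + (k : ℝ) ^ 3 * d, by positivity, fun α hα hα1 ↦ ?_⟩
  set R : ℝ := (1 / α) ^ (1 / 2 : ℝ)
  set c : ℝ := (k : ℝ) ^ 3 * d
  have hc : 0 ≤ c := by positivity
  have hR : 1 ≤ R := Real.one_le_rpow (one_le_one_div hα hα1) one_half_pos.le
  have hRα : α * R = 1 / R := by
    have hsq : R * R = 1 / α := by
      rw [← Real.rpow_add (by positivity), add_halves, Real.rpow_one]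
    rw [eq_div_iff (by positivity), mul_assoc, hsq, mul_one_div_cancel hα.ne']
  refine ⟨fun z ↦ ((k : ℝ) ^ 2 * d + c) * R - barrier R z.1, fun x ↦ ⟨?_, ?_⟩, fun x ↦ ?_⟩
  · nlinarith [barrier_le hR x.1]
  · exact sub_le_self _ (barrier_nonneg hR x.1)
  · have hgen : (exclusion d k).gen (fun z ↦ ((k : ℝ) ^ 2 * d + c) * R - barrier R z.1) x =
        -(exclusion d k).gen (fun z ↦ barrier R z.1) x := by
      simp only [JumpSystem.gen_apply, ← sum_neg_distrib]
      exact sum_congr rfl fun a _ ↦ by ring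
    rw [hgen]
    have hlow := card_contacts_sub_le_gen_barrier hR x
    have hbar : α * barrier R x.1 ≤ α * ((k : ℝ) ^ 2 * d * R) := by
      gcongr
      exact barrier_le hR x.1
    calc (#(contacts x.1) : ℝ) ≤ c * (1 / R) + (exclusion d k).gen (fun z ↦ barrier R z.1) x := by
          linarith
      _ ≤ _ := by
          rw [← hRα]
          linarith

lemma exists_abs_sub_walkGreen_le (d k : ℕ) {δ : ℝ} (hδ : 0 < δ) (hδ1 : δ ≤ 1) :
    ∃ C : ℝ, 0 ≤ C ∧ ∀ α : ℝ, 0 < α → α ≤ 1 → ∀ (f : Conf d k →ᵇ ℝ) (u : SSet d k → ℝ) (B : ℝ),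
      (∀ x, |u x| ≤ B) → (∀ x, α * u x - (exclusion d k).gen u x = f x) →
      ∀ x, |u x - walkGreen unitStep α f x| ≤ C * ((1 / α) ^ (1 / 2 : ℝ) * (1 / α) ^ δ * ‖f‖) := by
  obtain ⟨κ, hκ, hsuper⟩ := exists_contact_supersolution d k
  have : 0 < Real.Gamma δ := Real.Gamma_pos_of_pos hδ
  refine ⟨4 ^ δ * Real.Gamma δ / 2 * κ, by positivity, fun α hα hα1 f u B hu hf x ↦ ?_⟩
  obtain ⟨h, hh, hcontacts⟩ := hsuper α hα hα1
  set Ψ := walkGreen unitStep α f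
  set D := 4 ^ δ * ((1 / α) ^ δ * Real.Gamma δ) * ‖f‖
  have hD : 0 ≤ D / 2 := by positivity
  have hgen (x : SSet d k) : |(exclusion d k).gen (fun z ↦ Ψ z) x - Lrw Ψ x| ≤
      D / 2 * #(contacts x.1) :=
    abs_gen_exclusion_sub_Lrw_le
      (fun a b x hab ↦ abs_walkGreen_second_difference_le unitStep hα hδ hδ1 f hab x) x
  have hcompare := (exclusion d k).abs_le_of_abs_resolvent_le hα
    (v := u - fun z ↦ Ψ z.1) (h := (D / 2) • h) (B := B + ‖Ψ‖)
    (fun z ↦ (abs_sub _ _).trans (add_le_add (hu z) (Ψ.norm_coe_le_norm _)))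
    (fun z ↦ mul_nonneg hD (hh z).1) (fun z ↦ by
      have hΨ := walkGreen_resolvent_eq unitStep hα f z.1
      rw [← Lrw_eq_sum] at hΨ
      rw [map_sub, map_smul]
      simp only [Pi.sub_apply, Pi.smul_apply, smul_eq_mul]
      calc |α * (u z - Ψ z) - ((exclusion d k).gen u z - (exclusion d k).gen (fun z ↦ Ψ z) z)|
          = |(exclusion d k).gen (fun z ↦ Ψ z) z - Lrw Ψ z| := by
            congr 1
            linarith [hf z]
        _ ≤ D / 2 * #(contacts z.1) := hgen z
        _ ≤ D / 2 * (α * h z - (exclusion d k).gen h z) := by gcongr; exact hcontacts z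
        _ = _ := by ring) x
  calc |u x - Ψ x| ≤ D / 2 * h x := hcompare
    _ ≤ D / 2 * (κ * (1 / α) ^ (1 / 2 : ℝ)) := by gcongr; exact (hh x).2
    _ = _ := by ring

lemma exists_abs_add_unitStep_sub_le (d k : ℕ) {δ : ℝ} (hδ : 0 < δ) (hδ1 : δ ≤ 1) :
    ∃ C : ℝ, 0 < C ∧ ∀ α M : ℝ, 0 < α → α ≤ 1 → ∀ u : SSet d k → ℝ, (∀ x, |u x| ≤ M) →
      (∀ x, |(exclusion d k).gen u x| ≤ α * M) →
      ∀ (a : Fin k × Dir d) (x x' : SSet d k), x'.1 = x.1 + unitStep a →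
        |u x' - u x| ≤ C * ((1 / α) ^ (1 / 2 : ℝ) * (1 / α) ^ δ * (α * M)) := by
  obtain ⟨C, hC, hcompare⟩ := exists_abs_sub_walkGreen_le d k hδ hδ1
  have : 0 < Real.Gamma (1 / 2) := Real.Gamma_pos_of_pos one_half_pos
  refine ⟨2 * Real.Gamma (1 / 2) + 4 * C, by positivity,
    fun α M hα hα1 u hu hgen a x x' hx' ↦ ?_⟩
  have hM : 0 ≤ M := (abs_nonneg _).trans (hu x)
  let F (z : Conf d k) : ℝ :=
    if hz : z ∈ SSet d k then α * u ⟨z, hz⟩ - (exclusion d k).gen u ⟨z, hz⟩ else 0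
  have hF (z : Conf d k) : ‖F z‖ ≤ 2 * (α * M) := by
    by_cases hz : z ∈ SSet d k
    · have hαu : |α * u ⟨z, hz⟩| ≤ α * M := by
        rw [abs_mul, abs_of_pos hα]
        gcongr
        exact hu _
      simp only [F, dif_pos hz, Real.norm_eq_abs]
      linarith [abs_sub (α * u ⟨z, hz⟩) ((exclusion d k).gen u ⟨z, hz⟩), hgen ⟨z, hz⟩]
    · simp only [F, dif_neg hz, norm_zero]
      positivity
  set f := BoundedContinuousFunction.ofNormedAddCommGroupDiscrete F _ hF
  have hf : ‖f‖ ≤ 2 * (α * M) := (BoundedContinuousFunction.norm_le (by positivity)).2 hF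
  have hFu (z : SSet d k) : α * u z - (exclusion d k).gen u z = f z :=
    (show F z.1 = _ from dif_pos z.2).symm
  have hδα : 1 ≤ (1 / α) ^ δ := Real.one_le_rpow (one_le_one_div hα hα1) hδ.le
  set R := (1 / α) ^ (1 / 2 : ℝ)
  set Ψ := walkGreen unitStep α f
  have hΨ : |Ψ x' - Ψ x| ≤ Real.Gamma (1 / 2) * (R * (1 / α) ^ δ * ‖f‖) :=
    calc |Ψ x' - Ψ x| ≤ R * Real.Gamma (1 / 2) * ‖f‖ :=
          hx' ▸ abs_walkGreen_add_sub_le unitStep hα f a x.1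
      _ ≤ R * Real.Gamma (1 / 2) * ‖f‖ * (1 / α) ^ δ := le_mul_of_one_le_right (by positivity) hδα
      _ = _ := by ring
  have hx := hcompare α hα hα1 f u M hu hFu x
  have hx₁ := hcompare α hα hα1 f u M hu hFu x'
  calc |u x' - u x| = |(u x' - Ψ x') + (Ψ x' - Ψ x) - (u x - Ψ x)| := by ring_nf
    _ ≤ |u x' - Ψ x'| + |Ψ x' - Ψ x| + |u x - Ψ x| :=
        (abs_sub _ _).trans (by gcongr; exact abs_add_le _ _)
    _ ≤ (Real.Gamma (1 / 2) + 2 * C) * (R * (1 / α) ^ δ * ‖f‖) := by linarith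
    _ ≤ (Real.Gamma (1 / 2) + 2 * C) * (R * (1 / α) ^ δ * (2 * (α * M))) := by gcongr
    _ = _ := by ring

end Elliptic

/-! ### Poissonization -/

section Poissonization

open Finset
open scoped Nat

lemma factorial_add_le (n m : ℕ) : (n + m)! ≤ m ! * n ! * (n + 1) ^ m := by
  induction m with
  | zero => simp
  | succ m ih =>
    calc (n + m + 1)! = (n + m + 1) * (n + m)! := Nat.factorial_succ _
      _ ≤ (m + 1) * (n + 1) * (m ! * n ! * (n + 1) ^ m) := Nat.mul_le_mul (by nlinarith) ih
      _ = (m + 1)! * n ! * (n + 1) ^ (m + 1) := by rw [Nat.factorial_succ]; ring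

lemma pow_div_factorial_mul_rpow_neg_le {s p : ℝ} (hs : 0 ≤ s) (hp : 0 ≤ p) {m : ℕ} (hpm : p ≤ m)
    (n : ℕ) : s ^ n / n ! * ((n : ℝ) + 1) ^ (-p) ≤
      2 ^ (m - 1) * (s + 1) ^ (-p) * (s ^ n / n ! + m ! * (s ^ (n + m) / (n + m)!)) := by
  set q : ℝ := s / (n + 1)
  have hq : 0 ≤ q := by positivity
  have hratio : (s + 1) / (n + 1) ≤ 1 + q := by
    rw [add_div, add_comm]
    gcongr
    exact div_le_self zero_le_one (by simp)
  have hpow : ((n : ℝ) + 1) ^ (-p) ≤ (s + 1) ^ (-p) * (2 ^ (m - 1) * (1 + q ^ m)) :=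
    calc ((n : ℝ) + 1) ^ (-p) = (s + 1) ^ (-p) * ((s + 1) / (n + 1)) ^ p := by
          rw [Real.div_rpow (by positivity) (by positivity), Real.rpow_neg (by positivity),
            Real.rpow_neg (by positivity)]
          field_simp
      _ ≤ (s + 1) ^ (-p) * (1 + q) ^ (m : ℝ) := by
          gcongr
          refine (Real.rpow_le_rpow (by positivity) hratio hp).trans ?_
          exact Real.rpow_le_rpow_of_exponent_le (le_add_of_nonneg_right hq) hpm
      _ ≤ (s + 1) ^ (-p) * (2 ^ (m - 1) * (1 + q ^ m)) := by
          rw [Real.rpow_natCast]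
          gcongr
          simpa using add_pow_le zero_le_one hq m
  have hfact : s ^ n / n ! * q ^ m ≤ m ! * (s ^ (n + m) / (n + m)!) := by
    rw [div_pow, div_mul_div_comm, ← pow_add, ← mul_div_assoc, div_le_div_iff₀ (by positivity)
      (by positivity), mul_right_comm, mul_comm, ← mul_assoc]
    gcongr
    exact_mod_cast (factorial_add_le n m).trans_eq (by ring)
  calc s ^ n / n ! * ((n : ℝ) + 1) ^ (-p)
      ≤ s ^ n / n ! * ((s + 1) ^ (-p) * (2 ^ (m - 1) * (1 + q ^ m))) := by gcongr
    _ = 2 ^ (m - 1) * (s + 1) ^ (-p) * (s ^ n / n ! + s ^ n / n ! * q ^ m) := by ring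
    _ ≤ _ := by gcongr

lemma exists_abs_tsum_poisson_le {p : ℝ} (hp : 0 ≤ p) :
    ∃ C : ℝ, 0 < C ∧ ∀ (s B : ℝ) (g : ℕ → ℝ), 0 ≤ s → 0 ≤ B →
      (∀ n, |g n| ≤ B * ((n : ℝ) + 1) ^ (-p)) →
      |∑' n, s ^ n / n ! * g n| ≤ C * B * (s + 1) ^ (-p) * Real.exp s := by
  obtain ⟨m, hpm⟩ := exists_nat_ge p
  refine ⟨2 ^ (m - 1) * (1 + m !), by positivity, fun s B g hs hB hg ↦ ?_⟩
  have hexp := hasSum_real_exp s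
  have hshift := (hasSum_nat_add_iff' m).2 hexp
  set head := ∑ i ∈ range m, s ^ i / (i)!
  have hhead : 0 ≤ head := sum_nonneg fun i _ ↦ by positivity
  have hmajorant : HasSum (fun n : ℕ ↦ B * (2 ^ (m - 1) * (s + 1) ^ (-p)) *
      (s ^ n / n ! + m ! * (s ^ (n + m) / (n + m)!)))
      (B * (2 ^ (m - 1) * (s + 1) ^ (-p)) * (Real.exp s + m ! * (Real.exp s - head))) :=
    (hexp.add (hshift.mul_left (m ! : ℝ))).mul_left _
  calc |∑' n, s ^ n / n ! * g n|
      ≤ B * (2 ^ (m - 1) * (s + 1) ^ (-p)) * (Real.exp s + m ! * (Real.exp s - head)) := by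
        rw [← Real.norm_eq_abs]
        refine tsum_of_norm_bounded hmajorant fun n ↦ ?_
        rw [norm_mul, Real.norm_of_nonneg (by positivity), Real.norm_eq_abs]
        calc s ^ n / n ! * |g n| ≤ s ^ n / n ! * (B * ((n : ℝ) + 1) ^ (-p)) := by
              gcongr
              exact hg n
          _ = B * (s ^ n / n ! * ((n : ℝ) + 1) ^ (-p)) := by ring
          _ ≤ _ := by
              rw [mul_assoc B]
              exact mul_le_mul_of_nonneg_left (pow_div_factorial_mul_rpow_neg_le hs hp hpm n) hB
    _ ≤ B * (2 ^ (m - 1) * (s + 1) ^ (-p)) * (Real.exp s + m ! * Real.exp s) := by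
        gcongr
        exact sub_le_self _ hhead
    _ = _ := by ring

lemma smul_sub_one_pow {𝔸 : Type*} [Ring 𝔸] [Algebra ℝ 𝔸] (Z : 𝔸) (s : ℝ) (n : ℕ) :
    (s ^ n / n !) • (Z - 1) ^ n =
      ∑ ij ∈ antidiagonal n, (s ^ ij.1 / ij.1 ! * ((-s) ^ ij.2 / ij.2 !)) • Z ^ ij.1 := by
  rw [sub_eq_add_neg, (Commute.neg_one_right Z).add_pow', smul_sum]
  refine sum_congr rfl fun ij hij ↦ ?_
  obtain ⟨i, j⟩ := ij
  obtain rfl := mem_antidiagonal.1 hij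
  have hneg : (-1 : 𝔸) ^ j = (-1 : ℝ) ^ j • 1 := by
    rw [← Algebra.algebraMap_eq_smul_one, map_pow, map_neg, map_one]
  rw [hneg, mul_smul_comm, mul_one, ← Nat.cast_smul_eq_nsmul ℝ, smul_smul, smul_smul]
  congr 1
  rw [Nat.cast_add_choose, neg_pow s j, pow_add]
  field_simp

namespace JumpSystem

variable {X A : Type*} [Fintype A] (S : JumpSystem X A)

lemma gen_pow_apply (u : FinSupp X) (n : ℕ) (x : X) :
    (S.gen ^ n) (fun z ↦ u z) x = (S.finGen ^ n) u x := by
  rw [finGen, Module.End.pow_restrict]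
  rfl

variable [Nonempty A]

lemma one_le_clock : 1 ≤ S.clock := by
  have hcard : (1 : ℝ) ≤ Fintype.card A := by exact_mod_cast Fintype.card_pos
  rw [clock]
  linarith

lemma kernel_le_one (n : ℕ) (x y : X) : S.kernel n y x ≤ 1 :=
  S.tsum_kernel n y ▸ (S.kernel n y).summable.le_tsum x fun z _ ↦ S.kernel_nonneg n z y

lemma summable_poisson_kernel (s : ℝ) (x y : X) :
    Summable fun n : ℕ ↦ s ^ n / n ! * S.kernel n y x := by
  refine (hasSum_real_exp |s|).summable.of_norm_bounded fun n ↦ ?_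
  rw [norm_mul, norm_div, norm_pow, Real.norm_natCast, Real.norm_of_nonneg (S.kernel_nonneg n x y)]
  exact mul_le_of_le_one_right (by positivity) (S.kernel_le_one n x y)

lemma tsum_finGen_pow_delta (t : ℝ) (x y : X) :
    ∑' n : ℕ, t ^ n / n ! * (S.finGen ^ n) (FinSupp.delta y) x =
      (∑' n : ℕ, (S.clock * t) ^ n / n ! * S.kernel n y x) * Real.exp (-(S.clock * t)) := by
  have hfin : S.finGen = S.clock • (S.step - 1) := by
    refine LinearMap.ext fun u ↦ DFunLike.ext _ _ fun z ↦ ?_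
    have hz : (S.clock • (S.step - 1)) u z = S.clock * (S.step u z - u z) := rfl
    rw [hz, step_apply, add_sub_cancel_left, mul_inv_cancel_left₀ S.clock_pos.ne', finGen_apply]
  set s := S.clock * t
  rw [← (hasSum_real_exp (-s)).tsum_eq, tsum_mul_tsum_eq_tsum_sum_antidiagonal_of_summable_norm
    (S.summable_poisson_kernel s x y).norm (hasSum_real_exp (-s)).summable.norm]
  refine tsum_congr fun n ↦ ?_
  have hpow : (t ^ n / n !) • S.finGen ^ n = (s ^ n / n !) • (S.step - 1) ^ n := by
    rw [hfin, smul_pow, smul_smul, mul_pow]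
    congr 1
    ring
  have hbinom := hpow.trans (smul_sub_one_pow S.step s n)
  calc t ^ n / n ! * (S.finGen ^ n) (FinSupp.delta y) x
      = ((t ^ n / n !) • S.finGen ^ n) (FinSupp.delta y) x := rfl
    _ = ∑ ij ∈ antidiagonal n, s ^ ij.1 / ij.1 ! * ((-s) ^ ij.2 / ij.2 !) * S.kernel ij.1 y x := by
        rw [hbinom, LinearMap.sum_apply, ← l2Form_delta x, map_sum]
        exact sum_congr rfl fun ij _ ↦ l2Form_delta x _
    _ = _ := sum_congr rfl fun ij _ ↦ mul_right_comm _ _ _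

end JumpSystem

variable {d k : ℕ} [Nonempty (Fin k × Dir d)] (t : ℝ)

lemma ptl_eq_tsum_poisson_kernel (x y : SSet d k) :
    ptl t x.1 y.1 = (∑' n : ℕ, ((exclusion d k).clock * t) ^ n / n ! *
      (exclusion d k).kernel n y x) * Real.exp (-((exclusion d k).clock * t)) := by
  rw [← JumpSystem.tsum_finGen_pow_delta, ptl]
  refine tsum_congr fun n ↦ ?_
  have hdelta : (fun z : SSet d k ↦ deltaFn y.1 z.1) = fun z ↦ FinSupp.delta y z := by
    ext z
    simp [deltaFn, FinSupp.delta_apply, Subtype.ext_iff]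
  rw [Lexc_iterate, hdelta, JumpSystem.gen_pow_apply]

lemma ptl_sub_ptl (x x' y : SSet d k) :
    ptl t x.1 y.1 - ptl t x'.1 y.1 = (∑' n : ℕ, ((exclusion d k).clock * t) ^ n / n ! *
      ((exclusion d k).kernel n y x - (exclusion d k).kernel n y x')) *
        Real.exp (-((exclusion d k).clock * t)) := by
  have hsum (z : SSet d k) :=
    (exclusion d k).summable_poisson_kernel ((exclusion d k).clock * t) z y
  simp only [mul_sub]
  rw [(hsum x).tsum_sub (hsum x'), sub_mul, ptl_eq_tsum_poisson_kernel, ptl_eq_tsum_poisson_kernel]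

end Poissonization

/-! ### Gradient bound -/

section Gradient

variable {d k : ℕ}

lemma exists_abs_kernel_add_unitStep_sub_le (d k : ℕ) [Nonempty (Fin k × Dir d)] {θ : ℝ}
    (hθ : θ ∈ Set.Ioo (0 : ℝ) 1) :
    ∃ C : ℝ, 0 < C ∧ ∀ (n : ℕ) (y : SSet d k) (a : Fin k × Dir d) (x x' : SSet d k),
      x'.1 = x.1 + unitStep a →
        |(exclusion d k).kernel n y x' - (exclusion d k).kernel n y x| ≤
          C * ((n : ℝ) + 1) ^ (-(((k * d : ℕ) + θ) / 2)) := by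
  obtain ⟨M, hM, hkernel⟩ := (exclusion_volumeGrowth d k).exists_kernel_le (by positivity)
  obtain ⟨C, hC, hgrad⟩ := exists_abs_add_unitStep_sub_le d k (δ := (1 - θ) / 2)
    (by linarith [hθ.2]) (by linarith [hθ.1])
  have hcard : Fintype.card (Fin k × Fin d) = k * d := by simp
  rw [hcard] at hkernel
  refine ⟨C * M, by positivity, fun n y a x x' hx' ↦ ?_⟩
  set N : ℝ := n + 1
  have hN : 0 < N := by positivity
  calc _ ≤ C * ((1 / (1 / N)) ^ (1 / 2 : ℝ) * (1 / (1 / N)) ^ ((1 - θ) / 2) *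
        (1 / N * (M * N ^ (-((k * d : ℕ) / 2) : ℝ)))) :=
        hgrad (1 / N) _ (by positivity) (div_le_self zero_le_one (by simp [N])) _
          (fun z ↦ (hkernel n z y).1)
          (fun z ↦ (hkernel n z y).2.trans_eq (by rw [one_div_mul_eq_div])) a x x' hx'
    _ = C * M * (N ^ (1 / 2 : ℝ) * N ^ ((1 - θ) / 2) * N ^ (-1 : ℝ) *
          N ^ (-((k * d : ℕ) / 2) : ℝ)) := by
        rw [one_div_one_div, Real.rpow_neg_one, one_div]
        ring
    _ = _ := by
        simp only [← Real.rpow_add hN]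
        ring_nf

lemma add_one_rpow_neg_le {p t : ℝ} (hp : 0 ≤ p) (ht : 0 ≤ t) :
    (t + 1) ^ (-p) ≤ 2 ^ p * (√t + 1) ^ (-(2 * p)) := by
  have hsq : (√t + 1) ^ 2 / 2 ≤ t + 1 := by
    nlinarith [Real.sq_sqrt ht, sq_nonneg (√t - 1)]
  calc (t + 1) ^ (-p) ≤ ((√t + 1) ^ 2 / 2) ^ (-p) :=
        Real.rpow_le_rpow_of_nonpos (by positivity) hsq (neg_nonpos.2 hp)
    _ = 2 ^ p * (√t + 1) ^ (-(2 * p)) := by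
        rw [Real.div_rpow (by positivity) two_pos.le, Real.rpow_neg two_pos.le, div_inv_eq_mul,
          mul_comm, ← Real.rpow_natCast_mul (by positivity)]
        ring_nf

theorem uniform_gradient_bound_general (d k : ℕ) {θ : ℝ} (hθ : θ ∈ Set.Ioo (0 : ℝ) 1) :
    ∃ C : ℝ, 0 < C ∧ ∀ x x' y : Conf d k, x ∈ SSet d k → x' ∈ SSet d k → y ∈ SSet d k →
      cnorm (x' - x) = 1 → ∀ t : ℝ, 0 ≤ t →
      |ptl t x y - ptl t x' y| ≤ C * (√t + 1) ^ (-(((k * d : ℕ) : ℝ) + θ)) := by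
  rcases isEmpty_or_nonempty (Fin k × Dir d) with hempty | _
  · refine ⟨1, one_pos, fun x x' y _ _ _ hxx' ↦ ?_⟩
    exact hempty.elim ((cnorm_eq_one_iff _).1 hxx').choose
  obtain ⟨B, hB, hgrad⟩ := exists_abs_kernel_add_unitStep_sub_le d k hθ
  set p : ℝ := ((k * d : ℕ) + θ) / 2 with hp
  have hp0 : 0 ≤ p := by have := hθ.1; positivity
  obtain ⟨C, hC, hpoisson⟩ := exists_abs_tsum_poisson_le hp0
  refine ⟨C * B * 2 ^ p, by positivity, fun x x' y hx hx' hy hxx' t ht ↦ ?_⟩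
  obtain ⟨a, ha⟩ := (cnorm_eq_one_iff _).1 hxx'
  set s := (exclusion d k).clock * t
  have hts : t ≤ s := le_mul_of_one_le_left ht (exclusion d k).one_le_clock
  calc |ptl t x y - ptl t x' y| ≤ C * B * (s + 1) ^ (-p) * Real.exp s * Real.exp (-s) := by
        rw [abs_sub_comm, ptl_sub_ptl t ⟨x', hx'⟩ ⟨x, hx⟩ ⟨y, hy⟩, abs_mul, Real.abs_exp]
        gcongr
        exact hpoisson s B _ (ht.trans hts) hB.le fun n ↦
          hgrad n _ a ⟨x, hx⟩ ⟨x', hx'⟩ (by rw [ha, add_sub_cancel])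
    _ = C * B * (s + 1) ^ (-p) := by
        rw [mul_assoc, ← Real.exp_add, add_neg_cancel, Real.exp_zero, mul_one]
    _ ≤ C * B * (t + 1) ^ (-p) := by
        gcongr C * B * ?_
        exact Real.rpow_le_rpow_of_nonpos (by positivity) (by gcongr) (neg_nonpos.2 hp0)
    _ ≤ C * B * (2 ^ p * (√t + 1) ^ (-(2 * p))) := by
        gcongr
        exact add_one_rpow_neg_le hp0 ht
    _ = _ := by rw [hp, mul_div_cancel₀ _ two_ne_zero, ← mul_assoc]

lemma e11_eq_unitStep (hd : 1 ≤ d) (hk : 1 ≤ k) :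
    unitStep ((⟨0, hk⟩ : Fin k), ((⟨0, hd⟩ : Fin d), (1 : ℤˣ))) = e11 d k := by
  funext i j
  simp only [unitStep, e11, Dir.vec, Pi.single_apply, Fin.ext_iff, ite_and]
  split_ifs <;> simp_all [Pi.single_apply, Fin.ext_iff]

lemma cnorm_e11 (hd : 1 ≤ d) (hk : 1 ≤ k) : cnorm (e11 d k) = 1 :=
  (cnorm_eq_one_iff _).2 ⟨_, e11_eq_unitStep hd hk⟩

end Gradient

/-- Theorem (spatially uniform gradient bound): for integers `d, k ≥ 1` and `θ ∈ (0,1)` there is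
a constant `C = C(θ,k,d)` such that for all `x, y ∈ 𝕊^k` with `x + e₁₁ ∈ 𝕊^k` and all `t ≥ 0`,
`|p_t^ℓ(x,y) − p_t^ℓ(x+e₁₁,y)| ≤ C (√t + 1)^{−(kd+θ)}`. -/
theorem uniform_gradient_bound (d k : ℕ) (hd : 1 ≤ d) (hk : 1 ≤ k)
    (θ : ℝ) (hθ : θ ∈ Set.Ioo (0 : ℝ) 1) :
    ∃ C : ℝ, 0 < C ∧ ∀ x y : Conf d k, x ∈ SSet d k → y ∈ SSet d k →
      x + e11 d k ∈ SSet d k → ∀ t : ℝ, 0 ≤ t →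
      |ptl t x y - ptl t (x + e11 d k) y| ≤
        C * (Real.sqrt t + 1) ^ (-(((k * d : ℕ) : ℝ) + θ)) := by
  obtain ⟨C, hC, hbound⟩ := uniform_gradient_bound_general d k hθ
  exact ⟨C, hC, fun x y hx hy hx' ↦ hbound x _ y hx hx' hy (by simp [cnorm_e11 hd hk])⟩

end SSEPPaper
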